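/- arXiv:2404.09175 — 4 statements merged into one kernel-verified Lean document; each statement's English description precedes it below -/
import Mathlib

section
/- (Γ, π) has property A if and only if both of the following hold: (i) π lies in K and every element of Γ lies in K (i.e., π and the elements of Γ are rational); and (ii) [K : 𝔽_q(π)] = [K_v : 𝔽_q((π))]. -/
/-!
Common setup: `Kv` is a complete field equipped with a (normalized, `ℤ`-valued)
valuation `Valued.v : Kv → ℤₘ₀ = WithZero (Multiplicative ℤ)`, and `K` is a dense
subfield of `Kv` (so that `Kv` is the completion `K_v` of `K`).  The valuation is
written multiplicatively: the additive valuation of `x` is `n` iff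
`Valued.v x = ofAdd (-n)`; the valuation ring `A_v` is `{x | Valued.v x ≤ 1}` and
`π A_v = {x | Valued.v x ≤ Valued.v π}`.
-/

open scoped Multiplicative

/-- The multiplicative value monoid `ℤₘ₀` for normalized `ℤ`-valued valuations. -/
abbrev ZM0 : Type := WithZero (Multiplicative ℤ)

/-- A sequence `b : ℕ → α` is `k`-automatic if its `k`-kernel
`{ (b (n k^i + j))_n : i ≥ 0, 0 ≤ j < k^i }` is finite. -/
def IsKAutomatic {α : Type*} (k : ℕ) (b : ℕ → α) : Prop :=
  {c : ℕ → α | ∃ i j : ℕ, j < k ^ i ∧ c = fun n => b (n * k ^ i + j)}.Finite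

/-- The sequence `{a n}_{n ≥ m}` is ultimately periodic: there are `N ≥ m` and
`L > 0` with `a (n + L) = a n` for all `n ≥ N`. -/
def UltimatelyPeriodic {α : Type*} (m : ℤ) (a : ℤ → α) : Prop :=
  ∃ N L : ℤ, m ≤ N ∧ 0 < L ∧ ∀ n : ℤ, N ≤ n → a (n + L) = a n

variable {Kv : Type*} [Field Kv] [Valued Kv ZM0]

/-- `x = ∑_{n ≥ m} a_n π^n` is the expansion of `x` with respect to `(Γ, π)`:
all digits `a n` for `n ≥ m` lie in `Γ` and the series converges to `x`. -/
def IsExpansion (π : Kv) (Γ : Set Kv) (m : ℤ) (a : ℤ → Kv) (x : Kv) : Prop :=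
  (∀ n : ℤ, m ≤ n → a n ∈ Γ) ∧
    HasSum (fun n : ℕ => a (m + n) * π ^ (m + (n : ℤ))) x

/-- `Γ ⊆ A_v` is a complete set of representatives of `A_v / π A_v`: reduction
modulo `π A_v` maps `Γ` bijectively onto `A_v / π A_v`. -/
def IsCompleteSetOfReps (π : Kv) (Γ : Set Kv) : Prop :=
  (∀ γ ∈ Γ, Valued.v γ ≤ 1) ∧
    ∀ x : Kv, Valued.v x ≤ 1 → ∃! γ, γ ∈ Γ ∧ Valued.v (x - γ) ≤ Valued.v π

/-- `(Γ, π)` has property A: for every `x ∈ K_v`, `x` is rational (i.e. `x ∈ K`)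
iff the digit sequence of the expansion of `x` w.r.t. `(Γ, π)` is ultimately
periodic. -/
def HasPropertyA (K : Subfield Kv) (π : Kv) (Γ : Set Kv) : Prop :=
  ∀ (x : Kv) (m : ℤ) (a : ℤ → Kv), IsExpansion π Γ m a x →
    (x ∈ K ↔ UltimatelyPeriodic m a)

/-- `(Γ, π)` has property B: for every `x ∈ K_v`, `x` is algebraic over `K` iff
the digit sequence of the expansion of `x` w.r.t. `(Γ, π)` is `p`-automatic. -/
def HasPropertyB (p : ℕ) (K : Subfield Kv) (π : Kv) (Γ : Set Kv) : Prop :=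
  ∀ (x : Kv) (m : ℤ) (a : ℤ → Kv), IsExpansion π Γ m a x →
    (IsAlgebraic ↥K x ↔ IsKAutomatic p fun n : ℕ => a (m + n))

/-- The degree `[S : F]` of a subset `S ⊆ Kv` over a subfield `F ⊆ Kv` (intended
for `F ⊆ S` with `S` a field): the rank of the `F`-span of `S` in `Kv`. -/
noncomputable def degOver (F : Subfield Kv) (S : Set Kv) : Cardinal :=
  Module.rank ↥F ↥(Submodule.span ↥F S)

/-- `Kv` is the completion of a global function field `K` of characteristic `p`
with respect to a normalized nontrivial valuation:  `Kv` has characteristic `p`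
and is complete, `K` is dense in `Kv`, the valuation takes every value `ofAdd n`
(`n ∈ ℤ`) on `K` (normalization/nontriviality), and `K` contains an element `x₀`
transcendental over the prime field `𝔽_p = ⊥` with `[K : 𝔽_p(x₀)] < ∞`. -/
structure IsGlobalFunctionFieldCompletion (p : ℕ) (K : Subfield Kv) : Prop where
  charP : CharP Kv p
  complete : CompleteSpace Kv
  dense : Dense (K : Set Kv)
  normalized : ∀ n : ℤ, ∃ x ∈ K,
    Valued.v x = ((Multiplicative.ofAdd n : Multiplicative ℤ) : ZM0)
  globalFunctionField : ∃ x₀ ∈ K, Transcendental (⊥ : Subfield Kv) x₀ ∧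
    degOver (Subfield.closure {x₀}) (K : Set Kv) < Cardinal.aleph0

/-- The constant field `𝔽_q` of `K`: the algebraic closure of `𝔽_p` in `K`,
i.e. the elements of `K` fixed by some positive power of the Frobenius. -/
def ConstantField (p : ℕ) (K : Subfield Kv) : Set Kv :=
  {x : Kv | x ∈ K ∧ ∃ n : ℕ, 0 < n ∧ x ^ p ^ n = x}

/-- The subfield `𝔽_q(π)` of `Kv` generated by `π` over the constant field. -/
def FqPi (p : ℕ) (K : Subfield Kv) (π : Kv) : Subfield Kv :=
  Subfield.closure (ConstantField p K ∪ {π})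

/-- `𝔽_q((π))`: the completion of `𝔽_q(π)`, i.e. its closure in `Kv`. -/
noncomputable def FqPiCompletion (p : ℕ) (K : Subfield Kv) (π : Kv) : Subfield Kv :=
  (FqPi p K π).topologicalClosure

/-!
Reduce modulo `π A_v`, and choose finitely many integral elements `eᵢ` of `K` whose reductions form
a basis of `A_v / π A_v` over `𝔽_q`. Expanding in powers of `π` shows that they are a basis of `K_v`
over `𝔽_q((π))`, and they are linearly independent over `𝔽_q(π)`. So condition (ii) says exactly
that `K` is the span of the `eᵢ` over `F = 𝔽_q(π)`.

If property A holds, constant digit sequences give the rationality of `π` and `Γ`, and summing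
geometric series shows that the integers of `K` lie in the module generated by the finite set `Γ`
over the integers of `F`. By Nakayama's lemma this module is already generated by the `eᵢ`.

Conversely, suppose that `K` is the span of the `eᵢ`. The tails of an expansion of `x ∈ K`,
multiplied by a common denominator of `x` and the digits, are combinations of the `eᵢ` whose
coefficients are polynomials in `π` of bounded degree: passing to the next tail subtracts a digit
and divides by `π`, which does not raise degrees. There are finitely many such combinations, so
some tail recurs, and a tail determines all later digits.
-/

namespace PropertyA

open Filter Topology Polynomial

variable {L Γ₀ : Type*} [Field L] [LinearOrderedCommGroupWithZero Γ₀] [Valued L Γ₀]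

/-! ### Series in powers of `π` -/

section Series

theorem exists_sub_lt_of_mem_closure {S : Set L} {x z : L} (hx : x ∈ closure S) (hz : z ≠ 0) :
    ∃ y ∈ S, Valued.v (x - y) < Valued.v z := by
  have hball : {y | Valued.v (y - x) < Valued.v z} ∈ 𝓝 x := by
    have hz' : (Valued.v : Valuation L Γ₀).restrict z ≠ 0 := by simpa using hz
    exact Valued.mem_nhds.2 ⟨Units.mk0 _ hz', fun y hy => (Valuation.restrict_lt_iff _).1 hy⟩
  obtain ⟨y, hyx, hyS⟩ := mem_closure_iff_nhds.1 hx _ hball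
  exact ⟨y, hyS, by rwa [Valuation.map_sub_swap]⟩

theorem one_sub_ne_zero_of_v_lt_one {x : L} (hx : Valued.v x < 1) : 1 - x ≠ 0 := fun h => by
  simpa [h] using Valuation.map_one_sub_of_lt _ hx

theorem nonarchimedeanRing : NonarchimedeanRing L := by
  have h := (Valued.v : Valuation L Γ₀).subgroups_basis.nonarchimedean
  rwa [show (Valued.v : Valuation L Γ₀).subgroups_basis.topology = _ from
    congrArg (·.toTopologicalSpace) (Valued.toUniformSpace_eq L Γ₀).symm] at h

theorem v_le_one_of_hasSum {π : L} (hπ : Valued.v π < 1) {b : ℕ → L}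
    (hb : ∀ n, Valued.v (b n) ≤ 1) {x : L} (hx : HasSum (fun n => b n * π ^ n) x) :
    Valued.v x ≤ 1 := by
  refine (Valued.isClosed_integer L).mem_of_tendsto hx (.of_forall fun s => ?_)
  refine Valuation.map_sum_le _ fun n _ => ?_
  rw [map_mul, map_pow]
  exact mul_le_one' (hb n) (pow_le_one' hπ.le n)

variable [MulArchimedean Γ₀] {π : L}

theorem exists_v_pow_mul_le_one (hπ : Valued.v π < 1) (x : L) :
    ∃ n : ℕ, Valued.v (π ^ n * x) ≤ 1 := by
  rcases eq_or_ne x 0 with rfl | hx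
  · exact ⟨0, by simp⟩
  · obtain ⟨n, hn⟩ := exists_pow_lt₀ hπ (Units.mk0 (Valued.v x) (by simpa using hx))⁻¹
    refine ⟨n, ?_⟩
    rw [map_mul, map_pow, ← le_mul_inv_iff₀ (by simpa [zero_lt_iff] using hx), one_mul]
    simpa using hn.le

theorem tendsto_mul_pow_zero (hπ : Valued.v π < 1) {b : ℕ → L} (hb : ∀ n, Valued.v (b n) ≤ 1) :
    Tendsto (fun n => b n * π ^ n) atTop (𝓝 0) := by
  rw [(Valued.hasBasis_nhds_zero L Γ₀).tendsto_right_iff]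
  intro γ _
  filter_upwards [(Valued.hasBasis_nhds_zero L Γ₀).tendsto_right_iff.1
    (Valued.tendsto_zero_pow_of_v_lt_one hπ) γ trivial] with n hn
  refine lt_of_le_of_lt ?_ hn
  rw [Valuation.restrict_le_iff, map_mul]
  exact mul_le_of_le_one_left' (hb n)

theorem summable_mul_pow [CompleteSpace L] (hπ : Valued.v π < 1) {b : ℕ → L}
    (hb : ∀ n, Valued.v (b n) ≤ 1) : Summable fun n => b n * π ^ n := by
  have : NonarchimedeanRing L := nonarchimedeanRing
  apply NonarchimedeanAddGroup.summable_of_tendsto_cofinite_zero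
  rw [Nat.cofinite_eq_atTop]
  exact tendsto_mul_pow_zero hπ hb

theorem hasSum_of_eq_add_mul [CompleteSpace L] (hπ : Valued.v π < 1) {b x : ℕ → L}
    (hb : ∀ n, Valued.v (b n) ≤ 1) (hx : ∀ n, Valued.v (x n) ≤ 1)
    (hrec : ∀ n, x n = b n + π * x (n + 1)) : HasSum (fun n => b n * π ^ n) (x 0) := by
  have hsum := (summable_mul_pow hπ hb).hasSum
  have hpartial : ∀ n, ∑ i ∈ Finset.range n, b i * π ^ i = x 0 - x n * π ^ n := by
    intro n
    induction n with
    | zero => simp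
    | succ n ih => rw [Finset.sum_range_succ, ih]; linear_combination (-π ^ n) * hrec n
  have hlim : Tendsto (fun n => x 0 - x n * π ^ n) atTop (𝓝 (x 0)) := by
    simpa using (tendsto_mul_pow_zero hπ hx).const_sub (x 0)
  simp_rw [← hpartial] at hlim
  rwa [tendsto_nhds_unique hsum.tendsto_sum_nat hlim] at hsum

theorem exists_hasSum_of_forall_exists_sub_le [CompleteSpace L] (hπ0 : π ≠ 0)
    (hπ : Valued.v π < 1) {S : Set L} (hS1 : ∀ s ∈ S, Valued.v s ≤ 1)
    (hS : ∀ x, Valued.v x ≤ 1 → ∃ s ∈ S, Valued.v (x - s) ≤ Valued.v π) {x : L}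
    (hx : Valued.v x ≤ 1) :
    ∃ b : ℕ → L, (∀ n, b n ∈ S) ∧ HasSum (fun n => b n * π ^ n) x := by
  have hstep : ∀ y : {y : L // Valued.v y ≤ 1}, ∃ s ∈ S, ∃ z : {z : L // Valued.v z ≤ 1},
      (y : L) = s + π * z := fun y => by
    obtain ⟨s, hs, hys⟩ := hS y y.2
    refine ⟨s, hs, ⟨(y - s) / π, ?_⟩, by field_simp; ring⟩
    rwa [map_div₀, div_le_one₀ (by simpa [zero_lt_iff] using hπ0)]
  choose digit hdigit next hnext using hstep
  let y : ℕ → {y : L // Valued.v y ≤ 1} := fun n => next^[n] ⟨x, hx⟩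
  refine ⟨fun n => digit (y n), fun n => hdigit _, hasSum_of_eq_add_mul (x := fun n => y n) hπ
    (fun n => hS1 _ (hdigit _)) (fun n => (y n).2) fun n => ?_⟩
  have hsucc : y (n + 1) = next (y n) := Function.iterate_succ_apply' next n _
  simpa only [hsucc] using hnext (y n)

/-- The `n`-th tail `∑ₖ b (n + k) πᵏ` of the series `∑ₖ b k πᵏ`, divided by `πⁿ`. -/
noncomputable def tailSum (π : L) (b : ℕ → L) (n : ℕ) : L := ∑' k, b (n + k) * π ^ k

variable [CompleteSpace L] {b : ℕ → L}

theorem v_tailSum_le_one (hπ : Valued.v π < 1) (hb : ∀ n, Valued.v (b n) ≤ 1) (n : ℕ) :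
    Valued.v (tailSum π b n) ≤ 1 :=
  v_le_one_of_hasSum hπ (fun k => hb (n + k)) (summable_mul_pow hπ fun k => hb (n + k)).hasSum

theorem tailSum_eq_add_mul (hπ : Valued.v π < 1) (hb : ∀ n, Valued.v (b n) ≤ 1) (n : ℕ) :
    tailSum π b n = b n + π * tailSum π b (n + 1) := by
  rw [tailSum, (summable_mul_pow hπ fun k => hb (n + k)).tsum_eq_zero_add, tailSum,
    ← tsum_mul_left, add_zero, pow_zero, mul_one]
  congr 1
  refine tsum_congr fun k => ?_
  rw [add_right_comm n 1 k, ← add_assoc]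
  ring

theorem tailSum_eq_sum_range_add (hπ : Valued.v π < 1) (hb : ∀ n, Valued.v (b n) ≤ 1) (n k : ℕ) :
    tailSum π b n = ∑ i ∈ Finset.range k, b (n + i) * π ^ i + π ^ k * tailSum π b (n + k) := by
  induction k with
  | zero => simp
  | succ k ih =>
    rw [ih, Finset.sum_range_succ, tailSum_eq_add_mul hπ hb (n + k), add_assoc n k 1]
    ring

end Series

/-! ### The field `C(π)` -/

section SimpleAdjoin

open scoped IntermediateField

variable {M : Type*} [Field M]

/-- The subfield `C(x)` generated by an element `x` over a subfield `C`, as a subfield rather than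
as the intermediate field `C⟮x⟯`, so that its topological closure is at hand. -/
def simpleAdjoin (C : Subfield M) (x : M) : Subfield M :=
  Subfield.closure ((C : Set M) ∪ {x})

variable (C : Subfield M) (x : M)

theorem simpleAdjoin_eq_toSubfield : simpleAdjoin C x = C⟮x⟯.toSubfield := by
  rw [simpleAdjoin, IntermediateField.adjoin_toSubfield]
  congr 2
  exact Subtype.range_coe.symm

theorem simpleAdjoin_bot : simpleAdjoin ⊥ x = Subfield.closure {x} := by
  rw [simpleAdjoin, Subfield.closure_union, Subfield.closure_eq, bot_sup_eq]

theorem le_simpleAdjoin : C ≤ simpleAdjoin C x := fun _ hc => Subfield.subset_closure (.inl hc)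

theorem self_mem_simpleAdjoin : x ∈ simpleAdjoin C x := Subfield.subset_closure (.inr rfl)

variable {C x}

theorem simpleAdjoin_le_iff {F : Subfield M} : simpleAdjoin C x ≤ F ↔ C ≤ F ∧ x ∈ F := by
  rw [simpleAdjoin, Subfield.closure_le, Set.union_subset_iff, Set.singleton_subset_iff]
  rfl

theorem exists_isRelPrime_aeval_div_of_mem_simpleAdjoin {f : M} (hf : f ∈ simpleAdjoin C x) :
    ∃ r s : C[X], IsRelPrime s r ∧ aeval x s ≠ 0 ∧ f = aeval x r / aeval x s := by
  rw [simpleAdjoin_eq_toSubfield] at hf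
  obtain ⟨r, s, rfl⟩ := (IntermediateField.mem_adjoin_simple_iff C f).1 hf
  rcases eq_or_ne (aeval x s) 0 with hs | hs
  · exact ⟨0, 1, isRelPrime_one_left, by simp, by simp [hs]⟩
  · obtain ⟨s', r', g, hrel, rfl, rfl⟩ :=
      UniqueFactorizationMonoid.exists_reduced_factors s (by rintro rfl; simp at hs) r
    rw [map_mul, mul_ne_zero_iff] at hs
    exact ⟨r', s', hrel, hs.2, by rw [map_mul, map_mul, mul_div_mul_left _ _ hs.1]⟩

variable {E F K : Subfield M} {y : M}

theorem mem_of_pow_mul_mem (hx0 : x ≠ 0) (hx : x ∈ F) {V : Submodule F M} {n : ℕ}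
    (h : x ^ n * y ∈ V) : y ∈ V := by
  have hy := V.smul_mem ((⟨x, hx⟩ : F) ^ n)⁻¹ h
  rwa [show ((⟨x, hx⟩ : F) ^ n)⁻¹ • (x ^ n * y) = y by
    simp [Subfield.smul_def, inv_mul_cancel_left₀ (pow_ne_zero n hx0)]] at hy

theorem isIntegral_of_finite_span (hEK : E ≤ K) [Module.Finite E (Submodule.span E (K : Set M))]
    (hy : y ∈ K) : IsIntegral E y := by
  let A : Subalgebra E M := (Subfield.extendScalars hEK).toSubalgebra
  have hA : Subalgebra.toSubmodule A = Submodule.span E (K : Set M) :=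
    (Submodule.span_eq (Subalgebra.toSubmodule A)).symm
  refine IsIntegral.of_mem_of_fg A ?_ y hy
  rwa [hA, ← Module.Finite.iff_fg]

theorem isAlgebraic_of_le (hEF : E ≤ F) (hy : IsAlgebraic E y) : IsAlgebraic F y := by
  let : Algebra E F := (Subfield.inclusion hEF).toAlgebra
  have : IsScalarTower E F M := .of_algebraMap_eq fun _ => rfl
  exact hy.tower_top F

theorem isAlgebraic_simpleAdjoin_swap (hx : Transcendental C x) (hy : Transcendental C y)
    (hxy : IsAlgebraic (simpleAdjoin C x) y) : IsAlgebraic (simpleAdjoin C y) x := by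
  rw [simpleAdjoin_eq_toSubfield] at hxy ⊢
  exact IntermediateField.isAlgebraic_adjoin_iff.2 (.adjoin_singleton hx hy
    (IntermediateField.isAlgebraic_adjoin_iff.1 hxy))

theorem finite_span_of_isAlgebraic [Module.Finite E (Submodule.span E (K : Set M))]
    (hE : E ≤ F⟮x⟯.toSubfield) (hx : IsAlgebraic F x) :
    Module.Finite F (Submodule.span F (K : Set M)) := by
  obtain ⟨s, hs⟩ : (Submodule.span E (K : Set M)).FG := Module.Finite.iff_fg.1 inferInstance
  let V : Submodule F⟮x⟯ M := Submodule.span F⟮x⟯ (s : Set M)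
  have hKV : Submodule.span F (K : Set M) ≤ V.restrictScalars F := by
    refine Submodule.span_le.2 fun z hz => ?_
    have hz' : z ∈ Submodule.span E (s : Set M) := hs ▸ Submodule.subset_span hz
    refine Submodule.span_induction (fun _ h => Submodule.subset_span h) (zero_mem _)
      (fun _ _ _ _ => add_mem) (fun a _ _ h => ?_) hz'
    exact V.smul_mem ⟨a, hE a.2⟩ h
  have : FiniteDimensional F F⟮x⟯ := IntermediateField.adjoin.finiteDimensional hx.isIntegral
  have : Module.Finite F⟮x⟯ V := .of_fg ⟨s, rfl⟩
  have : Module.Finite F (V.restrictScalars F) := Module.Finite.trans (R := F) F⟮x⟯ V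
  exact Submodule.finiteDimensional_of_le hKV

theorem finite_span_of_transcendental (hCK : C ≤ K) (hxK : x ∈ K) (hx : Transcendental C x)
    [Module.Finite (simpleAdjoin C x) (Submodule.span (simpleAdjoin C x) (K : Set M))]
    (hyK : y ∈ K) (hy : Transcendental C y) (hF : simpleAdjoin C y ≤ F) :
    Module.Finite F (Submodule.span F (K : Set M)) := by
  have hyx : IsAlgebraic (simpleAdjoin C x) y :=
    (isIntegral_of_finite_span (simpleAdjoin_le_iff.2 ⟨hCK, hxK⟩) hyK).isAlgebraic
  have hxF : IsAlgebraic F x := isAlgebraic_of_le hF (isAlgebraic_simpleAdjoin_swap hx hy hyx)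
  refine finite_span_of_isAlgebraic (E := simpleAdjoin C x) (simpleAdjoin_le_iff.2 ⟨?_, ?_⟩) hxF
  · exact fun c hc => F⟮x⟯.algebraMap_mem ⟨c, hF (le_simpleAdjoin C y hc)⟩
  · exact IntermediateField.mem_adjoin_simple_self F x

end SimpleAdjoin

/-! ### Residues modulo `π` -/

section Residues

variable (C : Subfield L) (π : L)

/-- Every integral element of `F` is congruent to a constant modulo `π`. -/
def ResiduesIn (F : Subfield L) : Prop :=
  ∀ f ∈ F, Valued.v f ≤ 1 → ∃ c : C, Valued.v (f - c) ≤ Valued.v π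

variable {C π}

theorem ResiduesIn.topologicalClosure {F : Subfield L} (hF : ResiduesIn C π F) (hπ0 : π ≠ 0)
    (hπ : Valued.v π < 1) : ResiduesIn C π F.topologicalClosure := by
  intro f hf hf1
  obtain ⟨g, hgF, hfg⟩ := exists_sub_lt_of_mem_closure (S := (F : Set L)) hf hπ0
  have hg1 : Valued.v g ≤ 1 := by
    simpa using Valuation.map_sub_le _ hf1 (hfg.trans hπ).le
  obtain ⟨c, hc⟩ := hF g hgF hg1
  exact ⟨c, by simpa using Valuation.map_add_le _ hfg.le hc⟩

variable [(Valued.v : Valuation L Γ₀).IsTrivialOn C]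

variable (C π) in
/-- The elements of valuation at most that of `π`, i.e. the ideal `π A_v`, as a vector space over a
field `C` of constants. -/
def residueKer : Submodule C L where
  carrier := {x | Valued.v x ≤ Valued.v π}
  zero_mem' := by simp
  add_mem' := Valuation.map_add_le _
  smul_mem' c x hx := by
    simp only [Set.mem_ofPred_eq, Algebra.smul_def, map_mul] at hx ⊢
    exact mul_le_of_le_one_of_le (Valuation.IsTrivialOn.valuation_algebraMap_le_one _ c) hx

variable (C π) in
/-- Reduction modulo `π A_v`. It is defined on the whole field, so that no subtypes are needed for
the residues of integral elements. -/
abbrev residueMap : L →ₗ[C] L ⧸ residueKer C π := (residueKer C π).mkQ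

theorem residueMap_eq_zero_iff {x : L} : residueMap C π x = 0 ↔ Valued.v x ≤ Valued.v π :=
  Submodule.Quotient.mk_eq_zero _

theorem residueMap_eq_iff {x y : L} :
    residueMap C π x = residueMap C π y ↔ Valued.v (x - y) ≤ Valued.v π := by
  rw [← residueMap_eq_zero_iff (C := C), map_sub, sub_eq_zero]

theorem v_coe_le_one (c : C) : Valued.v (c : L) ≤ 1 :=
  Valuation.IsTrivialOn.valuation_algebraMap_le_one _ c

theorem v_coe_eq_one {c : C} (hc : c ≠ 0) : Valued.v (c : L) = 1 :=
  Valuation.IsTrivialOn.eq_one c hc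

theorem v_aeval_le_one (hπ : Valued.v π < 1) (P : C[X]) : Valued.v (aeval π P) ≤ 1 := by
  rw [aeval_eq_sum_range]
  refine Valuation.map_sum_le _ fun i _ => ?_
  rw [Subfield.smul_def, smul_eq_mul, map_mul, map_pow]
  exact mul_le_one' (v_coe_le_one _) (pow_le_one' hπ.le i)

theorem v_aeval_sub_coeff_zero_le (hπ : Valued.v π < 1) (P : C[X]) :
    Valued.v (aeval π P - P.coeff 0) ≤ Valued.v π := by
  have hP : aeval π P - P.coeff 0 = aeval π P.divX * π := by
    conv_lhs => rw [← divX_mul_X_add P]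
    simp [show algebraMap C L = C.subtype from rfl]
  rw [hP, map_mul]
  exact mul_le_of_le_one_left' (v_aeval_le_one hπ _)

theorem v_aeval_eq_one (hπ : Valued.v π < 1) {P : C[X]} (hP : P.coeff 0 ≠ 0) :
    Valued.v (aeval π P) = 1 := by
  have hlt := (v_aeval_sub_coeff_zero_le hπ P).trans_lt hπ
  rw [← v_coe_eq_one hP] at hlt ⊢
  exact Valuation.map_eq_of_sub_lt _ hlt

theorem residuesIn_simpleAdjoin (hπ : Valued.v π < 1) : ResiduesIn C π (simpleAdjoin C π) := by
  intro f hf hf1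
  obtain ⟨r, s, hrel, hs, rfl⟩ := exists_isRelPrime_aeval_div_of_mem_simpleAdjoin hf
  by_cases hs0 : s.coeff 0 = 0
  · exfalso
    have hr0 : r.coeff 0 ≠ 0 := fun hr0 =>
      not_isUnit_X (hrel (X_dvd_iff.2 hs0) (X_dvd_iff.2 hr0))
    have hs_lt : Valued.v (aeval π s) < 1 := by
      simpa [hs0] using (v_aeval_sub_coeff_zero_le hπ s).trans_lt hπ
    rw [map_div₀, v_aeval_eq_one hπ hr0, div_le_one₀ (by simpa [zero_lt_iff] using hs)] at hf1
    exact hs_lt.not_ge hf1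
  · refine ⟨r.coeff 0 / s.coeff 0, ?_⟩
    have hs0' : (s.coeff 0 : L) ≠ 0 := by simpa using hs0
    have hnum : aeval π r / aeval π s - (r.coeff 0 / s.coeff 0 : C) =
        ((aeval π r - r.coeff 0) * s.coeff 0 - (aeval π s - s.coeff 0) * r.coeff 0) /
          (aeval π s * s.coeff 0) := by
      push_cast
      field_simp
      ring
    rw [hnum, map_div₀, map_mul _ (aeval π s), v_aeval_eq_one hπ hs0, one_mul,
      v_coe_eq_one hs0, div_one]
    refine Valuation.map_sub_le _ ?_ ?_ <;> rw [map_mul] <;>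
      exact mul_le_of_le_of_le_one (v_aeval_sub_coeff_zero_le hπ _) (v_coe_le_one _)

end Residues

/-! ### Residue bases -/

section ResidueBasis

/-- A family of integral elements whose reductions form a basis of `A_v / π A_v` over the field `C`
of constants. -/
structure IsResidueBasis (C : Subfield L) [(Valued.v : Valuation L Γ₀).IsTrivialOn C] (π : L)
    {ι : Type*} (e : ι → L) : Prop where
  v_le_one : ∀ i, Valued.v (e i) ≤ 1
  linearIndependent : LinearIndependent C (residueMap C π ∘ e)
  mem_span : ∀ x, Valued.v x ≤ 1 →
    residueMap C π x ∈ Submodule.span C (Set.range (residueMap C π ∘ e))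

variable {C F : Subfield L} [(Valued.v : Valuation L Γ₀).IsTrivialOn C] {π : L}
  {ι : Type*} {e : ι → L}

theorem v_le_of_sum_smul_eq_zero (hF : ResiduesIn C π F) (he : ∀ i, Valued.v (e i) ≤ 1)
    (hind : LinearIndependent C (residueMap C π ∘ e)) {s : Finset ι} {f : ι → F}
    (hf : ∀ i ∈ s, Valued.v (f i : L) ≤ 1) (hsum : ∑ i ∈ s, f i • e i = 0) :
    ∀ i ∈ s, Valued.v (f i : L) ≤ Valued.v π := by
  have hres : ∀ i, ∃ c : C, i ∈ s → Valued.v ((f i : L) - c) ≤ Valued.v π := fun i => by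
    by_cases hi : i ∈ s
    · exact (hF _ (f i).2 (hf i hi)).imp fun c hc _ => hc
    · exact ⟨0, fun h => absurd h hi⟩
  choose c hc using hres
  have hcsum : ∑ i ∈ s, c i • (residueMap C π ∘ e) i = 0 := by
    have hdiff : ∑ i ∈ s, c i • e i = -∑ i ∈ s, ((f i : L) - c i) * e i := by
      simp only [Subfield.smul_def, smul_eq_mul] at hsum ⊢
      simp only [sub_mul, Finset.sum_sub_distrib, hsum, zero_sub, neg_neg]
    simp only [Function.comp_apply, ← map_smul, ← map_sum, residueMap_eq_zero_iff]
    rw [hdiff, Valuation.map_neg]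
    refine Valuation.map_sum_le _ fun i hi => ?_
    rw [map_mul]
    exact mul_le_of_le_of_le_one (hc i hi) (he i)
  intro i hi
  simpa [linearIndependent_iff'.1 hind s c hcsum i hi] using hc i hi

-- Normalizing a relation so that its largest coefficient is `1` contradicts its reduction.
theorem linearIndependent_of_residueMap (hπ : Valued.v π < 1) (hF : ResiduesIn C π F)
    (he : ∀ i, Valued.v (e i) ≤ 1) (hind : LinearIndependent C (residueMap C π ∘ e)) :
    LinearIndependent F e := by
  refine linearIndependent_iff'.2 fun s f hsum i hi => ?_
  obtain ⟨j, hj, hmax⟩ := s.exists_max_image (fun i => Valued.v (f i : L)) ⟨i, hi⟩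
  have hfj : f j = 0 := by
    by_contra hfj
    have hvj : 0 < Valued.v (f j : L) := by simpa [zero_lt_iff] using hfj
    have hscaled : ∑ i ∈ s, (f i / f j) • e i = 0 := by
      simp only [div_eq_inv_mul, mul_smul, ← Finset.smul_sum, hsum, smul_zero]
    have hle := v_le_of_sum_smul_eq_zero hF he hind (f := fun i => f i / f j)
      (fun i hi => by simpa [div_le_one₀ hvj] using hmax i hi) hscaled j hj
    rw [div_self hfj, Subfield.coe_one, map_one] at hle
    exact hπ.not_ge hle
  simpa [hfj] using hmax i hi

namespace IsResidueBasis

theorem exists_sub_sum_smul_le [Fintype ι] (he : IsResidueBasis C π e) {x : L}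
    (hx : Valued.v x ≤ 1) : ∃ c : ι → C, Valued.v (x - ∑ i, c i • e i) ≤ Valued.v π := by
  obtain ⟨c, hc⟩ := (Submodule.mem_span_range_iff_exists_fun C).1 (he.mem_span x hx)
  refine ⟨c, (residueMap_eq_iff (C := C)).1 ?_⟩
  simp only [map_sum, map_smul, ← hc, Function.comp_apply]

variable [MulArchimedean Γ₀] [CompleteSpace L]

theorem exists_hasSum [Fintype ι] (he : IsResidueBasis C π e) (hπ0 : π ≠ 0)
    (hπ : Valued.v π < 1) {x : L} (hx : Valued.v x ≤ 1) :
    ∃ c : ℕ → ι → C, HasSum (fun n => (∑ i, c n i • e i) * π ^ n) x := by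
  let S : Set L := Set.range fun c : ι → C => ∑ i, c i • e i
  have hS1 : ∀ s ∈ S, Valued.v s ≤ 1 := by
    rintro _ ⟨c, rfl⟩
    refine Valuation.map_sum_le _ fun i _ => ?_
    rw [Subfield.smul_def, smul_eq_mul, map_mul]
    exact mul_le_one' (v_coe_le_one _) (he.v_le_one i)
  have hS : ∀ y, Valued.v y ≤ 1 → ∃ s ∈ S, Valued.v (y - s) ≤ Valued.v π := fun y hy => by
    obtain ⟨c, hc⟩ := he.exists_sub_sum_smul_le hy
    exact ⟨_, ⟨c, rfl⟩, hc⟩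
  obtain ⟨b, hb, hbx⟩ := exists_hasSum_of_forall_exists_sub_le hπ0 hπ hS1 hS hx
  choose c hc using hb
  exact ⟨c, by simpa only [hc] using hbx⟩

theorem mem_span_of_v_le_one [Finite ι] (he : IsResidueBasis C π e) (hπ0 : π ≠ 0)
    (hπ : Valued.v π < 1) (hFclosed : IsClosed (F : Set L)) (hCF : C ≤ F) (hπF : π ∈ F) {x : L}
    (hx : Valued.v x ≤ 1) : x ∈ Submodule.span F (Set.range e) := by
  cases nonempty_fintype ι
  obtain ⟨c, hc⟩ := he.exists_hasSum hπ0 hπ hx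
  have hcoeff : ∀ i, HasSum (fun n => (c n i : L) * π ^ n) (∑' n, (c n i : L) * π ^ n) := fun i =>
    (summable_mul_pow hπ fun n => v_coe_le_one (c n i)).hasSum
  have hcoeff_mem : ∀ i, ∑' n, (c n i : L) * π ^ n ∈ F := fun i =>
    hFclosed.mem_of_tendsto (hcoeff i) (.of_forall fun s =>
      sum_mem fun n _ => mul_mem (hCF (c n i).2) (pow_mem hπF n))
  have hsum : HasSum (fun n => (∑ i, c n i • e i) * π ^ n)
      (∑ i, (∑' n, (c n i : L) * π ^ n) * e i) := by
    simpa only [Finset.sum_mul, Subfield.smul_def, smul_eq_mul, mul_right_comm] using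
      hasSum_sum fun i _ => (hcoeff i).mul_right (e i)
  rw [hc.unique hsum]
  exact sum_mem fun i _ =>
    Submodule.smul_mem _ (⟨_, hcoeff_mem i⟩ : F) (Submodule.subset_span ⟨i, rfl⟩)

theorem span_eq_top [Finite ι] (he : IsResidueBasis C π e) (hπ0 : π ≠ 0)
    (hπ : Valued.v π < 1) (hFclosed : IsClosed (F : Set L)) (hCF : C ≤ F) (hπF : π ∈ F) :
    Submodule.span F (Set.range e) = ⊤ := by
  refine eq_top_iff.2 fun x _ => ?_
  obtain ⟨n, hn⟩ := exists_v_pow_mul_le_one hπ x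
  exact mem_of_pow_mul_mem hπ0 hπF (he.mem_span_of_v_le_one hπ0 hπ hFclosed hCF hπF hn)

theorem rank_topologicalClosure_simpleAdjoin [Fintype ι] (he : IsResidueBasis C π e)
    (hπ0 : π ≠ 0) (hπ : Valued.v π < 1) :
    Module.rank (simpleAdjoin C π).topologicalClosure L = Fintype.card ι := by
  have hle := (simpleAdjoin C π).le_topologicalClosure
  have hind : LinearIndependent (simpleAdjoin C π).topologicalClosure e :=
    linearIndependent_of_residueMap hπ ((residuesIn_simpleAdjoin hπ).topologicalClosure hπ0 hπ)
      he.v_le_one he.linearIndependent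
  have hspan := he.span_eq_top hπ0 hπ (simpleAdjoin C π).isClosed_topologicalClosure
    ((le_simpleAdjoin C π).trans hle) (hle (self_mem_simpleAdjoin C π))
  simpa using (rank_eq_card_basis (Module.Basis.mk hind hspan.ge))

end IsResidueBasis

theorem degOver_eq_card_iff [Fintype ι] {S : Set L} (hind : LinearIndependent F e)
    (heS : Set.range e ⊆ S) :
    degOver F S = Fintype.card ι ↔ S ⊆ Submodule.span F (Set.range e) := by
  have hrank : Module.rank F (Submodule.span F (Set.range e)) = Fintype.card ι :=
    rank_eq_card_basis (Module.Basis.span hind)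
  have hle : Submodule.span F (Set.range e) ≤ Submodule.span F S := Submodule.span_mono heS
  rw [← Submodule.span_le, degOver]
  constructor
  · intro hdeg
    have : Module.Finite F (Submodule.span F S) := by
      rw [← Module.rank_lt_aleph0_iff, hdeg]
      exact Cardinal.natCast_lt_aleph0
    have hfinrank := congrArg Cardinal.toNat (hrank.trans hdeg.symm)
    exact (Submodule.eq_of_le_of_finrank_eq hle hfinrank).ge
  · intro hS
    rw [hS.antisymm hle, hrank]

theorem exists_isResidueBasis {K : Subfield L} (hK : Dense (K : Set L)) (hπ0 : π ≠ 0)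
    (hπ : Valued.v π < 1) (hF : ResiduesIn C π F)
    [Module.Finite F (Submodule.span F (K : Set L))] :
    ∃ b : Set L, b.Finite ∧ b ⊆ K ∧ IsResidueBasis C π ((↑) : b → L) := by
  let O : Set L := {x | x ∈ K ∧ Valued.v x ≤ 1}
  obtain ⟨b, hbO, -, hspan, hind⟩ := exists_linearIndepOn_extension
    (linearIndepOn_empty C (residueMap C π)) (Set.empty_subset O)
  have hindF : LinearIndependent F (Subtype.val : b → L) :=
    linearIndependent_of_residueMap hπ hF (fun i => (hbO i.2).2) hind
  have : Finite b := by
    let e' : b → Submodule.span F (K : Set L) := fun i => ⟨i, Submodule.subset_span (hbO i.2).1⟩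
    have he' : LinearIndependent F e' := LinearIndependent.of_comp (Submodule.subtype _) hindF
    exact he'.finite
  refine ⟨b, b.toFinite, fun i hi => (hbO hi).1, fun i => (hbO i.2).2, hind, fun x hx => ?_⟩
  obtain ⟨y, hyK, hxy⟩ := exists_sub_lt_of_mem_closure (hK x) hπ0
  have hy : Valued.v y ≤ 1 := by simpa using Valuation.map_sub_le _ hx (hxy.trans hπ).le
  rw [residueMap_eq_iff.2 hxy.le, Set.range_comp, Subtype.range_coe]
  exact hspan ⟨y, ⟨hyK, hy⟩, rfl⟩

end ResidueBasis

/-! ### Finiteness of the residue ring -/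

section Finiteness

variable {C : Subfield L} [(Valued.v : Valuation L Γ₀).IsTrivialOn C] {π : L}

theorem IsResidueBasis.finite_of_injOn_residueMap [Finite C] {ι : Type*} [Finite ι] {e : ι → L}
    (he : IsResidueBasis C π e) {T : Set L} (hT : ∀ x ∈ T, Valued.v x ≤ 1)
    (hinj : Set.InjOn (residueMap C π) T) : T.Finite := by
  have hspan : Finite (Submodule.span C (Set.range (residueMap C π ∘ e))) := by
    have := Module.Finite.span_of_finite C (Set.finite_range (residueMap C π ∘ e))
    exact Module.finite_of_finite C
  refine Set.Finite.of_finite_image (Set.Finite.subset (Set.finite_coe_iff.1 hspan) ?_) hinj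
  rintro _ ⟨x, hx, rfl⟩
  exact he.mem_span x (hT x hx)

theorem injOn_residueMap_coe_subfield (hπ : Valued.v π < 1) (D : Subfield L)
    [(Valued.v : Valuation L Γ₀).IsTrivialOn D] : Set.InjOn (residueMap C π) D := by
  intro x hx y hy hxy
  by_contra hne
  have hv := v_coe_eq_one (Γ₀ := Γ₀) (c := (⟨x - y, sub_mem hx hy⟩ : D))
    (by simpa [Subtype.ext_iff, sub_eq_zero] using hne)
  exact hπ.not_ge (hv.symm.le.trans (residueMap_eq_iff.1 hxy))

end Finiteness

/-! ### The ring of integers of a subfield -/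

section IntegersOf

/-- The ring of integers `F ∩ A_v` of a subfield `F`. -/
def integersOf (F : Subfield L) : Subring L :=
  (Valued.v : Valuation L Γ₀).integer ⊓ F.toSubring

variable {F K : Subfield L} {π : L}

theorem mem_integersOf {x : L} : x ∈ integersOf F ↔ Valued.v x ≤ 1 ∧ x ∈ F := Iff.rfl

theorem inv_one_sub_mem_integersOf {x : L} (hx : Valued.v x < 1) (hxF : x ∈ F) :
    (1 - x)⁻¹ ∈ integersOf F :=
  mem_integersOf.2 ⟨by rw [map_inv₀, Valuation.map_one_sub_of_lt _ hx, inv_one],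
    inv_mem (sub_mem (one_mem F) hxF)⟩

theorem mem_jacobson_bot_integersOf (x : integersOf F) (hx : Valued.v (x : L) < 1) :
    x ∈ (⊥ : Ideal (integersOf F)).jacobson := by
  refine Ideal.mem_jacobson_bot.2 fun y => ?_
  have hxy : Valued.v (-(x * y) : L) < 1 := by
    rw [Valuation.map_neg, map_mul]
    exact (mul_le_of_le_one_right' y.2.1).trans_lt hx
  refine IsUnit.of_mul_eq_one ⟨_, inv_one_sub_mem_integersOf hxy (-(x * y)).2.2⟩ (Subtype.ext ?_)
  push_cast
  rw [show (x * y + 1 : L) = 1 - -(x * y) by ring]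
  exact mul_inv_cancel₀ (one_sub_ne_zero_of_v_lt_one hxy)

variable {C : Subfield L} [(Valued.v : Valuation L Γ₀).IsTrivialOn C] {ι : Type*} [Finite ι]
  {e : ι → L}

theorem IsResidueBasis.exists_mem_span_add_mul (he : IsResidueBasis C π e) (hπ0 : π ≠ 0)
    (hCF : C ≤ F) (hFK : F ≤ K) (hπK : π ∈ K) (heK : ∀ i, e i ∈ K) {x : L}
    (hx : x ∈ integersOf K) : ∃ y ∈ Submodule.span (integersOf F) (Set.range e),
      ∃ z ∈ integersOf K, x = y + π * z := by
  cases nonempty_fintype ι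
  obtain ⟨c, hc⟩ := he.exists_sub_sum_smul_le hx.1
  have hsumK : ∑ i, c i • e i ∈ K := sum_mem fun i _ => mul_mem (hFK (hCF (c i).2)) (heK i)
  refine ⟨∑ i, c i • e i, sum_mem fun i _ => ?_, (x - ∑ i, c i • e i) / π,
    mem_integersOf.2 ⟨?_, div_mem (sub_mem hx.2 hsumK) hπK⟩, by field_simp; ring⟩
  · exact Submodule.smul_mem _ (⟨c i, v_coe_le_one _, hCF (c i).2⟩ : integersOf F)
      (Submodule.subset_span ⟨i, rfl⟩)
  · rwa [map_div₀, div_le_one₀ (by simpa [zero_lt_iff] using hπ0)]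

theorem IsResidueBasis.integersOf_subset_span (he : IsResidueBasis C π e) (hπ0 : π ≠ 0)
    (hπ : Valued.v π < 1) (hCF : C ≤ F) (hπF : π ∈ F) (hFK : F ≤ K) (heK : ∀ i, e i ∈ K)
    (hfg : (Submodule.span (integersOf F) (integersOf K : Set L)).FG) :
    (integersOf K : Set L) ⊆ Submodule.span (integersOf F) (Set.range e) := by
  let π' : integersOf F := ⟨π, hπ.le, hπF⟩
  rw [← Submodule.span_le]
  refine Submodule.le_of_le_smul_of_le_jacobson_bot (I := Ideal.span {π'}) hfg ?_ ?_
  · exact (Ideal.span_singleton_le_iff_mem _).2 (mem_jacobson_bot_integersOf π' hπ)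
  · refine Submodule.span_le.2 fun x hx => ?_
    obtain ⟨y, hy, z, hz, rfl⟩ := he.exists_mem_span_add_mul hπ0 hCF hFK (hFK hπF) heK hx
    exact Submodule.add_mem_sup hy
      (Submodule.smul_mem_smul (Ideal.mem_span_singleton_self π') (Submodule.subset_span hz))

theorem IsResidueBasis.subset_span [MulArchimedean Γ₀] (he : IsResidueBasis C π e) (hπ0 : π ≠ 0)
    (hπ : Valued.v π < 1) (hCF : C ≤ F) (hπF : π ∈ F) (hFK : F ≤ K) (heK : ∀ i, e i ∈ K)
    (hfg : (Submodule.span (integersOf F) (integersOf K : Set L)).FG) :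
    (K : Set L) ⊆ Submodule.span F (Set.range e) := by
  intro x hx
  obtain ⟨n, hn⟩ := exists_v_pow_mul_le_one hπ x
  have hmem : π ^ n * x ∈ integersOf K := ⟨hn, mul_mem (pow_mem (hFK hπF) n) hx⟩
  refine mem_of_pow_mul_mem hπ0 hπF (n := n) ?_
  refine Submodule.span_induction (fun _ h => Submodule.subset_span h) (zero_mem _)
    (fun _ _ _ _ => add_mem) (fun a _ _ h => ?_)
    (he.integersOf_subset_span hπ0 hπ hCF hπF hFK heK hfg hmem)
  exact Submodule.smul_mem _ (⟨a, a.2.2⟩ : F) h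

end IntegersOf

/-! ### Periodic expansions -/

section Periodic

/-- Ultimate periodicity of a sequence indexed by `ℕ`, the analogue of `UltimatelyPeriodic` for
the shifted digit sequence `n ↦ a (m + n)`. -/
def EventuallyPeriodic {α : Type*} (b : ℕ → α) : Prop :=
  ∃ N k : ℕ, 0 < k ∧ ∀ n, N ≤ n → b (n + k) = b n

theorem ultimatelyPeriodic_iff {α : Type*} {m : ℤ} {a : ℤ → α} :
    UltimatelyPeriodic m a ↔ EventuallyPeriodic fun n : ℕ => a (m + n) := by
  constructor
  · rintro ⟨N, k, hmN, hk, hper⟩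
    refine ⟨(N - m).toNat, k.toNat, by omega, fun n hn => ?_⟩
    dsimp only
    rw [← hper (m + n) (by omega)]
    congr 1
    omega
  · rintro ⟨N, k, hk, hper⟩
    refine ⟨m + N, k, by omega, by omega, fun n hn => ?_⟩
    have h : a (m + ((n - m).toNat + k : ℕ)) = a (m + (n - m).toNat) :=
      hper (n - m).toNat (by omega)
    rwa [show m + ((n - m).toNat + k : ℕ) = n + k by omega,
      show m + ((n - m).toNat : ℤ) = n by omega] at h

variable [MulArchimedean Γ₀] [CompleteSpace L] {π : L} {F : Subfield L} {b : ℕ → L}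

theorem mem_span_integersOf_of_eventuallyPeriodic (hπ : Valued.v π < 1) (hπF : π ∈ F) {S : Set L}
    (hS : ∀ s ∈ S, Valued.v s ≤ 1) (hb : ∀ n, b n ∈ S) (hper : EventuallyPeriodic b) {x : L}
    (hx : HasSum (fun n => b n * π ^ n) x) : x ∈ Submodule.span (integersOf F) S := by
  obtain ⟨N, k, hk, hper⟩ := hper
  let V : Submodule (integersOf F) L := Submodule.span (integersOf F) S
  let π' : integersOf F := ⟨π, hπ.le, hπF⟩
  have hb1 : ∀ n, Valued.v (b n) ≤ 1 := fun n => hS _ (hb n)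
  have hpartial : ∀ n l, ∑ i ∈ Finset.range l, b (n + i) * π ^ i ∈ V := fun n l =>
    sum_mem fun i _ => by
      rw [mul_comm]
      exact V.smul_mem (π' ^ i) (Submodule.subset_span (hb (n + i)))
  have htail_period : tailSum π b (N + k) = tailSum π b N := tsum_congr fun i => by
    rw [add_right_comm, hper (N + i) (by omega)]
  have hπk : Valued.v (π ^ k) < 1 := by
    rw [map_pow]
    exact pow_lt_one' hπ hk.ne'
  have htail_mem : tailSum π b N ∈ V := by
    have hrec := tailSum_eq_sum_range_add hπ hb1 N k
    rw [htail_period] at hrec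
    have hsolve : tailSum π b N = (1 - π ^ k)⁻¹ * ∑ i ∈ Finset.range k, b (N + i) * π ^ i := by
      rw [eq_inv_mul_iff_mul_eq₀ (one_sub_ne_zero_of_v_lt_one hπk)]
      linear_combination hrec
    rw [hsolve]
    exact V.smul_mem ⟨_, inv_one_sub_mem_integersOf hπk (pow_mem hπF k)⟩ (hpartial N k)
  have hx0 : x = tailSum π b 0 := by simpa [tailSum] using hx.tsum_eq.symm
  rw [hx0, tailSum_eq_sum_range_add hπ hb1 0 N, zero_add]
  exact add_mem (hpartial 0 N) (V.smul_mem (π' ^ N) htail_mem)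

end Periodic

section Expansions

variable {K : Subfield Kv} {π : Kv} {Γ : Set Kv}

theorem isExpansion_iff (hπ0 : π ≠ 0) {m : ℤ} {a : ℤ → Kv} {x : Kv} :
    IsExpansion π Γ m a x ↔ (∀ n : ℕ, a (m + n) ∈ Γ) ∧
      HasSum (fun n : ℕ => a (m + n) * π ^ n) (x / π ^ m) := by
  refine and_congr ⟨fun h n => h _ (by omega), fun h n hn => ?_⟩ ?_
  · simpa only [show m + ((n - m).toNat : ℤ) = n by omega] using h (n - m).toNat
  · have hterm : (fun n : ℕ => a (m + n) * π ^ (m + (n : ℤ))) =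
        fun n : ℕ => a (m + n) * π ^ n * π ^ m := by
      funext n
      rw [zpow_add₀ hπ0, zpow_natCast]
      ring
    rw [hterm, ← hasSum_mul_right_iff (a₁ := x / π ^ m) (zpow_ne_zero m hπ0),
      div_mul_cancel₀ _ (zpow_ne_zero m hπ0)]

theorem hasPropertyA_iff (hπ0 : π ≠ 0) (hπK : π ∈ K) :
    HasPropertyA K π Γ ↔ ∀ (x : Kv) (b : ℕ → Kv), (∀ n, b n ∈ Γ) →
      HasSum (fun n => b n * π ^ n) x → (x ∈ K ↔ EventuallyPeriodic b) := by
  constructor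
  · intro hA x b hb hx
    have hexp : IsExpansion π Γ 0 (fun n => b n.toNat) x :=
      (isExpansion_iff hπ0).2 ⟨by simpa using hb, by simpa using hx⟩
    simpa [ultimatelyPeriodic_iff] using hA x 0 _ hexp
  · intro h x m a hexp
    obtain ⟨ha, hx⟩ := (isExpansion_iff hπ0).1 hexp
    rw [ultimatelyPeriodic_iff, ← h _ _ ha hx]
    refine ⟨fun hxK => div_mem hxK (zpow_mem hπK m), fun hxK => ?_⟩
    simpa [div_mul_cancel₀ _ (zpow_ne_zero m hπ0)] using mul_mem hxK (zpow_mem hπK m)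

theorem injOn_residueMap_of_isCompleteSetOfReps (hΓ : IsCompleteSetOfReps π Γ) {C : Subfield Kv}
    [(Valued.v : Valuation Kv ZM0).IsTrivialOn C] : Set.InjOn (residueMap C π) Γ :=
  fun x hx _ hy hxy => (hΓ.2 x (hΓ.1 x hx)).unique ⟨hx, by simp⟩ ⟨hy, residueMap_eq_iff.1 hxy⟩

variable [CompleteSpace Kv]

theorem isExpansion_const (hπ0 : π ≠ 0) (hπ : Valued.v π < 1) {γ : Kv} (hγ : γ ∈ Γ)
    (hγ1 : Valued.v γ ≤ 1) (m : ℤ) :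
    IsExpansion π Γ m (fun _ => γ) (γ / (1 - π) * π ^ m) := by
  refine (isExpansion_iff hπ0).2 ⟨fun _ => hγ, ?_⟩
  rw [mul_div_cancel_right₀ _ (zpow_ne_zero m hπ0)]
  have hone : 1 - π ≠ 0 := one_sub_ne_zero_of_v_lt_one hπ
  refine hasSum_of_eq_add_mul (x := fun _ => γ / (1 - π)) hπ (fun _ => hγ1) (fun _ => ?_)
    fun _ => by field_simp; ring
  rwa [map_div₀, Valuation.map_one_sub_of_lt _ hπ, div_one]

theorem rational_of_hasPropertyA (hπ0 : π ≠ 0) (hπ : Valued.v π < 1)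
    (hΓ : IsCompleteSetOfReps π Γ) (hA : HasPropertyA K π Γ) : π ∈ K ∧ Γ ⊆ (K : Set Kv) := by
  have hone : 1 - π ≠ 0 := one_sub_ne_zero_of_v_lt_one hπ
  have hconst : ∀ γ ∈ Γ, ∀ m : ℤ, γ / (1 - π) * π ^ m ∈ K := fun γ hγ m =>
    (hA _ m _ (isExpansion_const hπ0 hπ hγ (hΓ.1 γ hγ) m)).2 ⟨m, 1, le_rfl, one_pos, fun _ _ => rfl⟩
  have hπK : π ∈ K := by
    obtain ⟨γ, ⟨hγ, hγ1⟩, -⟩ := hΓ.2 1 (by simp)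
    have hγ0 : γ ≠ 0 := by
      rintro rfl
      exact hπ.not_ge (by simpa using hγ1)
    simpa [div_ne_zero hγ0 hone] using div_mem (hconst γ hγ 1) (hconst γ hγ 0)
  refine ⟨hπK, fun γ hγ => ?_⟩
  simpa [hone] using mul_mem (hconst γ hγ 0) (sub_mem (one_mem K) hπK)

theorem mem_of_eventuallyPeriodic (hπ : Valued.v π < 1) (hπK : π ∈ K)
    (hΓ : IsCompleteSetOfReps π Γ) (hΓK : Γ ⊆ (K : Set Kv)) {b : ℕ → Kv} (hb : ∀ n, b n ∈ Γ)
    (hper : EventuallyPeriodic b) {x : Kv} (hx : HasSum (fun n => b n * π ^ n) x) : x ∈ K :=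
  Submodule.span_induction (fun _ h => hΓK h) (zero_mem K) (fun _ _ _ _ => add_mem)
    (fun a _ _ h => mul_mem a.2.2 h)
    (mem_span_integersOf_of_eventuallyPeriodic hπ hπK hΓ.1 hb hper hx)

theorem integersOf_subset_span_of_hasPropertyA (hπ0 : π ≠ 0) (hπ : Valued.v π < 1)
    (hΓ : IsCompleteSetOfReps π Γ) (hA : HasPropertyA K π Γ) {F : Subfield Kv} (hπF : π ∈ F) :
    (integersOf K : Set Kv) ⊆ Submodule.span (integersOf F) Γ := by
  intro x hx
  obtain ⟨b, hb, hbx⟩ := exists_hasSum_of_forall_exists_sub_le hπ0 hπ hΓ.1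
    (fun y hy => (hΓ.2 y hy).exists) hx.1
  have hπK := (rational_of_hasPropertyA hπ0 hπ hΓ hA).1
  have hper := ((hasPropertyA_iff hπ0 hπK).1 hA x b hb hbx).1 hx.2
  exact mem_span_integersOf_of_eventuallyPeriodic hπ hπF hΓ.1 hb hper hbx

end Expansions

/-! ### Combinations of a residue basis with polynomial coefficients -/

section PolySpan

variable {C : Subfield L} {π : L} {ι : Type*} [Fintype ι] {e : ι → L}

variable (C π e) in
/-- The map `(Pᵢ) ↦ ∑ Pᵢ(π) eᵢ` on families of polynomials. -/
noncomputable def polySum : (ι → C[X]) →ₗ[C] L :=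
  ∑ i, LinearMap.mulRight C (e i) ∘ₗ (aeval π).toLinearMap ∘ₗ LinearMap.proj i

theorem polySum_apply (P : ι → C[X]) : polySum C π e P = ∑ i, aeval π (P i) * e i := by
  simp [polySum]

variable (C π e) in
/-- The combinations `∑ Pᵢ(π) eᵢ` with polynomials `Pᵢ` of degree less than `d`. They confine the
tails of an expansion, up to a common denominator, to a finite set. -/
noncomputable def polySpan (d : ℕ) : Submodule C L :=
  (Submodule.pi Set.univ fun _ : ι => degreeLT C d).map (polySum C π e)

theorem mem_polySpan {d : ℕ} {x : L} :
    x ∈ polySpan C π e d ↔ ∃ P : ι → C[X], (∀ i, (P i).degree < d) ∧ x = polySum C π e P := by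
  simp [polySpan, Submodule.mem_map, Submodule.mem_pi, mem_degreeLT, eq_comm]

theorem finite_polySpan [Finite C] (d : ℕ) : (polySpan C π e d : Set L).Finite := by
  have hfin : Finite (degreeLT C d) := .of_equiv _ (degreeLTEquiv C d).symm.toEquiv
  rw [polySpan, Submodule.map_coe, Submodule.coe_pi]
  exact (Set.Finite.pi fun _ => Set.finite_coe_iff.1 hfin).image _

theorem exists_common_denominator {κ : Type*} [Finite κ] {f : κ → L}
    (hf : ∀ k, f k ∈ simpleAdjoin C π) :
    ∃ (D : C[X]) (P : κ → C[X]), aeval π D ≠ 0 ∧ ∀ k, aeval π D * f k = aeval π (P k) := by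
  classical
  cases nonempty_fintype κ
  choose r s _ hs hrs using fun k => exists_isRelPrime_aeval_div_of_mem_simpleAdjoin (hf k)
  refine ⟨∏ k, s k, fun k => r k * ∏ j ∈ Finset.univ.erase k, s j, ?_, fun k => ?_⟩
  · rw [map_prod]
    exact Finset.prod_ne_zero_iff.2 fun k _ => hs k
  · rw [← Finset.mul_prod_erase _ s (Finset.mem_univ k), map_mul, map_mul, hrs k]
    field_simp [hs k]

theorem exists_mul_mem_polySpan {T : Set L} (hT : T.Finite)
    (hTspan : T ⊆ Submodule.span (simpleAdjoin C π) (Set.range e)) :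
    ∃ (D : C[X]) (d : ℕ), aeval π D ≠ 0 ∧ ∀ x ∈ T, aeval π D * x ∈ polySpan C π e d := by
  have := hT.fintype
  choose f hf using fun x : T => (Submodule.mem_span_range_iff_exists_fun _).1 (hTspan x.2)
  obtain ⟨D, P, hD, hP⟩ :=
    exists_common_denominator (f := fun k : T × ι => (f k.1 k.2 : L)) fun k => (f k.1 k.2).2
  let d : ℕ := Finset.univ.sup fun k => (P k).natDegree
  refine ⟨D, d + 1, hD, fun x hx => mem_polySpan.2 ⟨fun i => P (⟨x, hx⟩, i), fun i => ?_, ?_⟩⟩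
  · have hle : (P (⟨x, hx⟩, i)).natDegree ≤ d :=
      Finset.le_sup (f := fun k => (P k).natDegree) (Finset.mem_univ _)
    exact degree_le_natDegree.trans_lt (by exact_mod_cast Nat.lt_succ_of_le hle)
  · have hx' : ∑ i, (f ⟨x, hx⟩ i : L) * e i = x := hf ⟨x, hx⟩
    simp only [polySum_apply, ← hP, mul_assoc, ← Finset.mul_sum, hx']

variable [(Valued.v : Valuation L Γ₀).IsTrivialOn C]

theorem IsResidueBasis.coeff_zero_eq_zero (he : IsResidueBasis C π e) (hπ : Valued.v π < 1)
    {P : ι → C[X]} (hP : Valued.v (polySum C π e P) ≤ Valued.v π) (i : ι) :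
    (P i).coeff 0 = 0 := by
  refine Fintype.linearIndependent_iff.1 he.linearIndependent (fun i => (P i).coeff 0) ?_ i
  simp only [Function.comp_apply, ← map_smul, ← map_sum, residueMap_eq_zero_iff]
  have hdiff : ∑ i, (P i).coeff 0 • e i =
      polySum C π e P - ∑ i, (aeval π (P i) - (P i).coeff 0) * e i := by
    simp only [polySum_apply, sub_mul, Finset.sum_sub_distrib, Subfield.smul_def, smul_eq_mul,
      sub_sub_cancel]
  rw [hdiff]
  refine Valuation.map_sub_le _ hP (Valuation.map_sum_le _ fun i _ => ?_)
  rw [map_mul]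
  exact mul_le_of_le_of_le_one (v_aeval_sub_coeff_zero_le hπ _) (he.v_le_one i)

theorem IsResidueBasis.mem_polySpan_of_mul_mem (he : IsResidueBasis C π e) (hπ0 : π ≠ 0)
    (hπ : Valued.v π < 1) {d : ℕ} {w : L} (hw : Valued.v w ≤ 1) (h : π * w ∈ polySpan C π e d) :
    w ∈ polySpan C π e d := by
  obtain ⟨P, hPdeg, hP⟩ := mem_polySpan.1 h
  have hP0 : ∀ i, (P i).coeff 0 = 0 := he.coeff_zero_eq_zero hπ <| by
    rw [← hP, map_mul]
    exact mul_le_of_le_one_right' hw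
  refine mem_polySpan.2 ⟨fun i => (P i).divX, fun i => ?_, mul_left_cancel₀ hπ0 ?_⟩
  · obtain hPi | hPi := eq_or_ne (P i) 0
    · simpa only [hPi, divX_zero] using hPdeg i
    · exact (degree_divX_lt hPi).trans (hPdeg i)
  · have hdivX : ∀ i, aeval π (P i) = π * aeval π (P i).divX := fun i => by
      conv_lhs => rw [← divX_mul_X_add (P i), hP0 i]
      simp [mul_comm]
    simp only [hP, polySum_apply, hdivX, Finset.mul_sum, mul_assoc]

end PolySpan

section Pigeonhole

variable {π : Kv} {Γ : Set Kv} [CompleteSpace Kv] {b : ℕ → Kv}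

theorem digit_eq_of_tailSum_eq (hπ : Valued.v π < 1) (hΓ : IsCompleteSetOfReps π Γ)
    (hb : ∀ n, b n ∈ Γ) {i j : ℕ} (hij : tailSum π b i = tailSum π b j) : b i = b j := by
  have hb1 : ∀ n, Valued.v (b n) ≤ 1 := fun n => hΓ.1 _ (hb n)
  have hcong : ∀ n, Valued.v (tailSum π b n - b n) ≤ Valued.v π := fun n => by
    rw [tailSum_eq_add_mul hπ hb1 n, add_sub_cancel_left, map_mul]
    exact mul_le_of_le_one_right' (v_tailSum_le_one hπ hb1 _)
  exact (hΓ.2 _ (v_tailSum_le_one hπ hb1 i)).unique ⟨hb i, hcong i⟩ ⟨hb j, hij ▸ hcong j⟩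

theorem tailSum_add_eq_of_tailSum_eq (hπ0 : π ≠ 0) (hπ : Valued.v π < 1)
    (hΓ : IsCompleteSetOfReps π Γ) (hb : ∀ n, b n ∈ Γ) {i j : ℕ}
    (hij : tailSum π b i = tailSum π b j) (k : ℕ) : tailSum π b (i + k) = tailSum π b (j + k) := by
  have hb1 : ∀ n, Valued.v (b n) ≤ 1 := fun n => hΓ.1 _ (hb n)
  induction k with
  | zero => exact hij
  | succ k ih =>
    have hdigit := digit_eq_of_tailSum_eq hπ hΓ hb ih
    rw [tailSum_eq_add_mul hπ hb1 (i + k), tailSum_eq_add_mul hπ hb1 (j + k), hdigit] at ih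
    exact mul_left_cancel₀ hπ0 (add_left_cancel ih)

theorem eventuallyPeriodic_of_finite_range_tailSum (hπ0 : π ≠ 0) (hπ : Valued.v π < 1)
    (hΓ : IsCompleteSetOfReps π Γ) (hb : ∀ n, b n ∈ Γ) (hfin : (Set.range (tailSum π b)).Finite) :
    EventuallyPeriodic b := by
  obtain ⟨i, j, hij, htail⟩ := Set.Finite.exists_lt_map_eq_of_forall_mem
    (f := tailSum π b) Set.mem_range_self hfin
  refine ⟨i, j - i, by omega, fun n hn => ?_⟩
  have hshift := digit_eq_of_tailSum_eq hπ hΓ hb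
    (tailSum_add_eq_of_tailSum_eq hπ0 hπ hΓ hb htail (n - i))
  rw [show i + (n - i) = n by omega, show j + (n - i) = n + (j - i) by omega] at hshift
  exact hshift.symm

variable {C : Subfield Kv} [(Valued.v : Valuation Kv ZM0).IsTrivialOn C] {ι : Type*} {e : ι → Kv}

theorem mul_tailSum_mem_polySpan [Fintype ι] (he : IsResidueBasis C π e) (hπ0 : π ≠ 0)
    (hπ : Valued.v π < 1) (hb : ∀ n, Valued.v (b n) ≤ 1) {D : C[X]} {d : ℕ}
    (hDb : ∀ n, aeval π D * b n ∈ polySpan C π e d)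
    (hD0 : aeval π D * tailSum π b 0 ∈ polySpan C π e d) (n : ℕ) :
    aeval π D * tailSum π b n ∈ polySpan C π e d := by
  induction n with
  | zero => exact hD0
  | succ n ih =>
    refine he.mem_polySpan_of_mul_mem hπ0 hπ ?_ ?_
    · rw [map_mul]
      exact mul_le_one' (v_aeval_le_one hπ D) (v_tailSum_le_one hπ hb _)
    · have hrec : π * (aeval π D * tailSum π b (n + 1)) =
          aeval π D * tailSum π b n - aeval π D * b n := by
        rw [tailSum_eq_add_mul hπ hb n]
        ring
      rw [hrec]
      exact sub_mem ih (hDb n)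

theorem eventuallyPeriodic_of_subset_span [Finite C] [Finite ι] (he : IsResidueBasis C π e)
    (hπ0 : π ≠ 0) (hπ : Valued.v π < 1) (hΓ : IsCompleteSetOfReps π Γ) (hΓfin : Γ.Finite)
    (hΓspan : Γ ⊆ Submodule.span (simpleAdjoin C π) (Set.range e)) (hb : ∀ n, b n ∈ Γ) {x : Kv}
    (hx : HasSum (fun n => b n * π ^ n) x)
    (hxspan : x ∈ Submodule.span (simpleAdjoin C π) (Set.range e)) : EventuallyPeriodic b := by
  cases nonempty_fintype ι
  obtain ⟨D, d, hD, hDT⟩ :=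
    exists_mul_mem_polySpan (hΓfin.insert x) (Set.insert_subset hxspan hΓspan)
  have hx0 : tailSum π b 0 = x := by simpa [tailSum] using hx.tsum_eq
  have hmem := mul_tailSum_mem_polySpan he hπ0 hπ (fun n => hΓ.1 _ (hb n))
    (fun n => hDT _ (.inr (hb n))) (hx0 ▸ hDT x (.inl rfl))
  refine eventuallyPeriodic_of_finite_range_tailSum hπ0 hπ hΓ hb ?_
  have hfin : (polySpan C π e d : Set Kv).Finite := finite_polySpan d
  refine Set.Finite.of_finite_image (hfin.subset ?_) (mul_right_injective₀ hD).injOn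
  rintro _ ⟨_, ⟨n, rfl⟩, rfl⟩
  exact hmem n

end Pigeonhole

/-! ### Function fields -/

section FunctionField

/-- `K` is a function field in one variable over `C`: a finite extension of `C(x)` for some
transcendental `x`. -/
def IsFunctionFieldOver {M : Type*} [Field M] (C K : Subfield M) : Prop :=
  C ≤ K ∧ ∃ x ∈ K, Transcendental C x ∧ degOver (simpleAdjoin C x) (K : Set M) < Cardinal.aleph0

variable {C K : Subfield L} [(Valued.v : Valuation L Γ₀).IsTrivialOn C] {π : L}

theorem transcendental_of_v_lt_one (hπ0 : π ≠ 0) (hπ : Valued.v π < 1) : Transcendental C π :=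
  Valuation.transcendental_of_ne_one (v := (Valued.v : Valuation L Γ₀)) C π (by simpa) hπ.ne

theorem IsFunctionFieldOver.finite_span (hK : IsFunctionFieldOver C K) (hπ0 : π ≠ 0)
    (hπ : Valued.v π < 1) (hπK : π ∈ K) {F : Subfield L} (hF : simpleAdjoin C π ≤ F) :
    Module.Finite F (Submodule.span F (K : Set L)) := by
  obtain ⟨hCK, x, hxK, hx, hdeg⟩ := hK
  have := Module.rank_lt_aleph0_iff.1 hdeg
  exact finite_span_of_transcendental hCK hxK hx hπK (transcendental_of_v_lt_one hπ0 hπ) hF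

theorem IsFunctionFieldOver.mono (hK : IsFunctionFieldOver C K) (hπ0 : π ≠ 0)
    (hπ : Valued.v π < 1) (hπK : π ∈ K) {D : Subfield L}
    [(Valued.v : Valuation L Γ₀).IsTrivialOn D] (hCD : C ≤ D) (hDK : D ≤ K) :
    IsFunctionFieldOver D K := by
  have hle : simpleAdjoin C π ≤ simpleAdjoin D π := simpleAdjoin_le_iff.2
    ⟨hCD.trans (le_simpleAdjoin D π), self_mem_simpleAdjoin D π⟩
  exact ⟨hDK, π, hπK, transcendental_of_v_lt_one hπ0 hπ,
    Module.rank_lt_aleph0_iff.2 (hK.finite_span hπ0 hπ hπK hle)⟩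

theorem IsFunctionFieldOver.exists_isResidueBasis (hK : IsFunctionFieldOver C K)
    (hdense : Dense (K : Set L)) (hπ0 : π ≠ 0) (hπ : Valued.v π < 1) (hπK : π ∈ K) :
    ∃ b : Set L, b.Finite ∧ b ⊆ K ∧ IsResidueBasis C π ((↑) : b → L) := by
  have := hK.finite_span hπ0 hπ hπK le_rfl
  exact PropertyA.exists_isResidueBasis hdense hπ0 hπ (residuesIn_simpleAdjoin hπ)

theorem IsFunctionFieldOver.finite_of_injOn_residueMap [Finite C] (hK : IsFunctionFieldOver C K)
    (hdense : Dense (K : Set L)) (hπ0 : π ≠ 0) (hπ : Valued.v π < 1) (hπK : π ∈ K) {T : Set L}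
    (hT : ∀ x ∈ T, Valued.v x ≤ 1) (hinj : Set.InjOn (residueMap C π) T) : T.Finite := by
  obtain ⟨b, hb, -, he⟩ := hK.exists_isResidueBasis hdense hπ0 hπ hπK
  have := hb.to_subtype
  exact he.finite_of_injOn_residueMap hT hinj

theorem IsResidueBasis.degOver_eq_rank_iff [MulArchimedean Γ₀] [CompleteSpace L] {ι : Type*}
    [Finite ι] {e : ι → L} (he : IsResidueBasis C π e) (hπ0 : π ≠ 0) (hπ : Valued.v π < 1)
    (heK : Set.range e ⊆ K) :
    degOver (simpleAdjoin C π) (K : Set L) =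
        Module.rank (simpleAdjoin C π).topologicalClosure L ↔
      (K : Set L) ⊆ Submodule.span (simpleAdjoin C π) (Set.range e) := by
  cases nonempty_fintype ι
  rw [he.rank_topologicalClosure_simpleAdjoin hπ0 hπ]
  exact degOver_eq_card_iff (linearIndependent_of_residueMap hπ (residuesIn_simpleAdjoin hπ)
    he.v_le_one he.linearIndependent) heK

end FunctionField

section Main

variable {C K : Subfield Kv} {π : Kv} {Γ : Set Kv} [CompleteSpace Kv]

theorem IsResidueBasis.hasPropertyA_iff_subset_span
    [(Valued.v : Valuation Kv ZM0).IsTrivialOn C] [Finite C] (hCK : C ≤ K) (hπ0 : π ≠ 0)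
    (hπ : Valued.v π < 1) (hπK : π ∈ K) (hΓ : IsCompleteSetOfReps π Γ)
    (hΓfin : Γ.Finite) (hΓK : Γ ⊆ (K : Set Kv)) {ι : Type*} [Finite ι] {e : ι → Kv}
    (he : IsResidueBasis C π e) (heK : ∀ i, e i ∈ K) :
    HasPropertyA K π Γ ↔ (K : Set Kv) ⊆ Submodule.span (simpleAdjoin C π) (Set.range e) := by
  let F : Subfield Kv := simpleAdjoin C π
  have hπF : π ∈ F := self_mem_simpleAdjoin C π
  constructor
  · intro hA
    have hspan : Submodule.span (integersOf F) (integersOf K : Set Kv) =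
        Submodule.span (integersOf F) Γ :=
      le_antisymm (Submodule.span_le.2 (integersOf_subset_span_of_hasPropertyA hπ0 hπ hΓ hA hπF))
        (Submodule.span_mono fun γ hγ => ⟨hΓ.1 γ hγ, hΓK hγ⟩)
    exact he.subset_span hπ0 hπ (le_simpleAdjoin C π) hπF (simpleAdjoin_le_iff.2 ⟨hCK, hπK⟩) heK
      (hspan ▸ Submodule.fg_span hΓfin)
  · intro hK
    refine (hasPropertyA_iff hπ0 hπK).2 fun x b hb hx => ⟨fun hxK => ?_, fun hper => ?_⟩
    · exact eventuallyPeriodic_of_subset_span he hπ0 hπ hΓ hΓfin (hΓK.trans hK) hb hx (hK hxK)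
    · exact mem_of_eventuallyPeriodic hπ hπK hΓ hΓK hb hper hx

theorem _root_.propertyA_iff_rational_and_degree_eq_general [Finite C]
    (hK : IsFunctionFieldOver C K) (hdense : Dense (K : Set Kv)) (hπ0 : π ≠ 0) (hπ : Valued.v π < 1)
    (hΓ : IsCompleteSetOfReps π Γ) :
    HasPropertyA K π Γ ↔
      ((π ∈ K ∧ Γ ⊆ (K : Set Kv)) ∧
        degOver (simpleAdjoin C π) (K : Set Kv) =
          Module.rank (simpleAdjoin C π).topologicalClosure Kv) := by
  refine (and_iff_right_of_imp (rational_of_hasPropertyA hπ0 hπ hΓ)).symm.trans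
    (and_congr_right fun ⟨hπK, hΓK⟩ => ?_)
  obtain ⟨b, hb, hbK, he⟩ := hK.exists_isResidueBasis hdense hπ0 hπ hπK
  have := hb.to_subtype
  have hΓfin : Γ.Finite := hK.finite_of_injOn_residueMap hdense hπ0 hπ hπK hΓ.1
    (injOn_residueMap_of_isCompleteSetOfReps hΓ)
  rw [he.degOver_eq_rank_iff hπ0 hπ (Subtype.range_coe.trans_subset hbK)]
  exact he.hasPropertyA_iff_subset_span hK.1 hπ0 hπ hπK hΓ hΓfin hΓK fun i => hbK i.2

end Main

/-! ### The constant field -/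

section ConstantField

theorem pow_pow_mul_eq_self {G : Type*} [Monoid G] {p n : ℕ} {x : G} (h : x ^ p ^ n = x)
    (m : ℕ) : x ^ p ^ (n * m) = x := by
  induction m with
  | zero => simp
  | succ m ih => rw [Nat.mul_succ, pow_add, pow_mul, ih, h]

variable {M : Type*} [Field M] (p : ℕ) [Fact p.Prime] [CharP M p] (K : Subfield M)

/-- The set `ConstantField p K`, i.e. `𝔽_q`, as a subfield. -/
def constantField : Subfield M where
  carrier := ConstantField p K
  mul_mem' := by
    rintro a b ⟨ha, n, hn, hna⟩ ⟨hb, m, hm, hmb⟩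
    refine ⟨mul_mem ha hb, n * m, Nat.mul_pos hn hm, ?_⟩
    rw [mul_pow, pow_pow_mul_eq_self hna, mul_comm n m, pow_pow_mul_eq_self hmb]
  one_mem' := ⟨one_mem K, 1, one_pos, one_pow _⟩
  add_mem' := by
    rintro a b ⟨ha, n, hn, hna⟩ ⟨hb, m, hm, hmb⟩
    refine ⟨add_mem ha hb, n * m, Nat.mul_pos hn hm, ?_⟩
    rw [add_pow_char_pow, pow_pow_mul_eq_self hna, mul_comm n m, pow_pow_mul_eq_self hmb]
  zero_mem' := ⟨zero_mem K, 1, one_pos, zero_pow (pow_ne_zero _ (Fact.out : p.Prime).ne_zero)⟩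
  neg_mem' := by
    rintro a ⟨ha, n, hn, hna⟩
    refine ⟨neg_mem ha, n, hn, ?_⟩
    simpa [hna, (Fact.out : p.Prime).ne_zero] using sub_pow_char_pow (p := p) (0 : M) a n
  inv_mem' := by
    rintro a ⟨ha, n, hn, hna⟩
    exact ⟨inv_mem ha, n, hn, by rw [inv_pow, hna]⟩

theorem constantField_le : constantField p K ≤ K := fun _ h => h.1

theorem fqPi_eq_simpleAdjoin (π : M) : FqPi p K π = simpleAdjoin (constantField p K) π := rfl

end ConstantField

section GlobalFunctionField

variable {p : ℕ} {K : Subfield Kv}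

instance isTrivialOn_constantField [Fact p.Prime] [CharP Kv p] :
    (Valued.v : Valuation Kv ZM0).IsTrivialOn (constantField p K) where
  eq_one := by
    intro ⟨c, _, n, hn, hc⟩ hc0
    have hroot : c ^ (p ^ n - 1) = 1 :=
      mul_right_cancel₀ (b := c) (by simpa [Subtype.ext_iff] using hc0) <| by
        rw [pow_sub_one_mul (pow_ne_zero _ (Fact.out : p.Prime).ne_zero), hc, one_mul]
    have hpow : 1 < p ^ n := Nat.one_lt_pow hn.ne' (Fact.out : p.Prime).one_lt
    refine (pow_eq_one_iff_left (Nat.sub_pos_of_lt hpow).ne').1 ?_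
    rw [← map_pow]
    exact hroot ▸ map_one _

theorem exists_mem_v_lt_one (hK : IsGlobalFunctionFieldCompletion p K) :
    ∃ x ∈ K, x ≠ 0 ∧ Valued.v x < 1 := by
  obtain ⟨x, hxK, hx⟩ := hK.normalized (-1)
  refine ⟨x, hxK, ?_, ?_⟩
  · rintro rfl
    simp at hx
  · rw [hx]
    exact WithZero.coe_lt_coe.2 (by decide)

theorem isFunctionFieldOver_bot (hK : IsGlobalFunctionFieldCompletion p K) :
    IsFunctionFieldOver ⊥ K := by
  obtain ⟨x₀, hx₀K, hx₀, hdeg⟩ := hK.globalFunctionField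
  exact ⟨bot_le, x₀, hx₀K, hx₀, by rwa [simpleAdjoin_bot]⟩

theorem isFunctionFieldOver_constantField [Fact p.Prime] [CharP Kv p]
    (hK : IsGlobalFunctionFieldCompletion p K) : IsFunctionFieldOver (constantField p K) K := by
  have := Subfield.fintypeBot Kv p
  obtain ⟨x, hxK, hx0, hx⟩ := exists_mem_v_lt_one hK
  exact (isFunctionFieldOver_bot hK).mono hx0 hx hxK bot_le (constantField_le p K)

theorem finite_constantField [Fact p.Prime] [CharP Kv p]
    (hK : IsGlobalFunctionFieldCompletion p K) : Finite (constantField p K) := by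
  have := Subfield.fintypeBot Kv p
  obtain ⟨x, hxK, hx0, hx⟩ := exists_mem_v_lt_one hK
  exact (isFunctionFieldOver_bot hK).finite_of_injOn_residueMap hK.dense hx0 hx hxK
    (fun c hc => v_coe_le_one (⟨c, hc⟩ : constantField p K)) (injOn_residueMap_coe_subfield hx _)

end GlobalFunctionField

end PropertyA

/-- **Theorem 1.1.** `(Γ, π)` has property A if and only if (i) `π` and the
elements of `Γ` are rational (lie in `K`), and (ii) `[K : 𝔽_q(π)] = [K_v : 𝔽_q((π))]`. -/
theorem propertyA_iff_rational_and_degree_eq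
    {Kv : Type*} [Field Kv] [Valued Kv ZM0]
    (p : ℕ) [Fact p.Prime] (K : Subfield Kv)
    (hK : IsGlobalFunctionFieldCompletion p K)
    (π : Kv) (hπ0 : π ≠ 0) (hπ : Valued.v π < 1)
    (Γ : Set Kv) (hΓ : IsCompleteSetOfReps π Γ) :
    HasPropertyA K π Γ ↔
      ((π ∈ K ∧ Γ ⊆ (K : Set Kv)) ∧
        degOver (FqPi p K π) (K : Set Kv) = Module.rank ↥(FqPiCompletion p K π) Kv) := by
  have := hK.charP
  have := hK.complete
  have := PropertyA.finite_constantField hK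
  rw [FqPiCompletion, PropertyA.fqPi_eq_simpleAdjoin]
  exact propertyA_iff_rational_and_degree_eq_general
    (PropertyA.isFunctionFieldOver_constantField hK) hK.dense hπ0 hπ hΓ
end

section
/- If (Γ, π) has property A, then π ∈ K and every element of Γ lies in K. -/
/-!
Common setup: `Kv` is a complete field equipped with a (normalized, `ℤ`-valued)
valuation `Valued.v : Kv → ℤₘ₀ = WithZero (Multiplicative ℤ)`, and `K` is a dense
subfield of `Kv` (so that `Kv` is the completion `K_v` of `K`).  The valuation is
written multiplicatively: the additive valuation of `x` is `n` iff
`Valued.v x = ofAdd (-n)`; the valuation ring `A_v` is `{x | Valued.v x ≤ 1}` and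
`π A_v = {x | Valued.v x ≤ Valued.v π}`.
-/

open scoped Multiplicative

variable {Kv : Type*} [Field Kv] [Valued Kv ZM0]

/-!
The constant digit sequence `γ ∈ Γ` starting at index `m` expands `γ π ^ m / (1 - π)`, which is thus
an element of `K`. For `γ ≠ 0` the quotient of the elements for `m = 1` and `m = 0` is `π`, and then
multiplying the element for `m = 0` by `1 - π ∈ K` recovers every digit `γ`.
-/

open Filter Topology

section Nonarchimedean

theorem hasSum_of_tendsto_sum_range_of_nonarchimedean {G : Type*} [AddCommGroup G] [UniformSpace G]
    [IsUniformAddGroup G] [NonarchimedeanAddGroup G] {f : ℕ → G} {s : G}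
    (hf : Tendsto f atTop (𝓝 0))
    (hs : Tendsto (fun n => ∑ i ∈ Finset.range n, f i) atTop (𝓝 s)) : HasSum f s := by
  have hcauchy : CauchySeq fun t : Finset ℕ => ∑ i ∈ t, f i :=
    NonarchimedeanAddGroup.cauchySeq_sum_of_tendsto_cofinite_zero (Nat.cofinite_eq_atTop ▸ hf)
  exact tendsto_nhds_of_cauchySeq_of_subseq hcauchy tendsto_finset_range hs

theorem hasSum_geometric_of_tendsto_pow_zero {F : Type*} [DivisionRing F] [UniformSpace F]
    [IsUniformAddGroup F] [NonarchimedeanRing F] {x : F} (hx1 : x ≠ 1)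
    (hx : Tendsto (fun n : ℕ => x ^ n) atTop (𝓝 0)) :
    HasSum (fun n : ℕ => x ^ n) (1 - x)⁻¹ := by
  have hlim : Tendsto (fun n : ℕ => (x ^ n - 1) * (x - 1)⁻¹) atTop (𝓝 ((0 - 1) * (x - 1)⁻¹)) :=
    (hx.sub_const 1).mul_const _
  refine hasSum_of_tendsto_sum_range_of_nonarchimedean hx ?_
  simpa only [geom_sum_eq hx1, div_eq_mul_inv, zero_sub, neg_one_mul, ← inv_neg, neg_sub]
    using hlim

end Nonarchimedean

section ValuedRing

variable {Γ₀ : Type*} [LinearOrderedCommGroupWithZero Γ₀]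

theorem nonarchimedeanRing_of_valued (R : Type*) [Ring R] [Valued R Γ₀] : NonarchimedeanRing R := by
  rw [Valued.toUniformSpace_eq R Γ₀]
  exact (Valued.v.subgroups_basis).nonarchimedean

theorem hasSum_geometric_of_v_lt_one {F : Type*} [DivisionRing F] [MulArchimedean Γ₀] [Valued F Γ₀]
    {x : F} (hx : Valued.v x < 1) : HasSum (fun n : ℕ => x ^ n) (1 - x)⁻¹ := by
  have := nonarchimedeanRing_of_valued (Γ₀ := Γ₀) F
  have hx1 : x ≠ 1 := fun h => hx.ne (by rw [h, map_one])
  exact hasSum_geometric_of_tendsto_pow_zero hx1 (Valued.tendsto_zero_pow_of_v_lt_one hx)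

end ValuedRing

theorem ultimatelyPeriodic_const {α : Type*} (m : ℤ) (c : α) :
    UltimatelyPeriodic m fun _ => c :=
  ⟨m, 1, le_rfl, one_pos, fun _ _ => rfl⟩

theorem isExpansion_const {π : Kv} (hπ0 : π ≠ 0) (hπ : Valued.v π < 1) {Γ : Set Kv} {γ : Kv}
    (hγ : γ ∈ Γ) (m : ℤ) : IsExpansion π Γ m (fun _ => γ) (γ * π ^ m * (1 - π)⁻¹) := by
  refine ⟨fun _ _ => hγ, ?_⟩
  simpa only [zpow_add₀ hπ0, zpow_natCast, mul_assoc]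
    using (hasSum_geometric_of_v_lt_one hπ).mul_left (γ * π ^ m)

theorem IsCompleteSetOfReps.exists_ne_zero {π : Kv} {Γ : Set Kv} (hΓ : IsCompleteSetOfReps π Γ)
    (hπ : Valued.v π < 1) : ∃ γ ∈ Γ, γ ≠ 0 := by
  obtain ⟨γ, ⟨hγ, hγ1⟩, -⟩ := hΓ.2 1 (map_one _).le
  refine ⟨γ, hγ, ?_⟩
  rintro rfl
  rw [sub_zero, map_one] at hγ1
  exact hπ.not_ge hγ1

theorem rational_of_propertyA_general {K : Subfield Kv} {π : Kv} (hπ0 : π ≠ 0)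
    (hπ : Valued.v π < 1) {Γ : Set Kv} (hΓ : ∃ γ ∈ Γ, γ ≠ 0)
    (hA : ∀ (x : Kv) (m : ℤ) (a : ℤ → Kv),
      IsExpansion π Γ m a x → UltimatelyPeriodic m a → x ∈ K) :
    π ∈ K ∧ Γ ⊆ (K : Set Kv) := by
  have hconst {γ : Kv} (hγ : γ ∈ Γ) (m : ℤ) : γ * π ^ m * (1 - π)⁻¹ ∈ K :=
    hA _ m _ (isExpansion_const hπ0 hπ hγ m) (ultimatelyPeriodic_const m γ)
  have hne : 1 - π ≠ 0 := sub_ne_zero.2 fun h => hπ.ne (by rw [← h, map_one])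
  have hπK : π ∈ K := by
    obtain ⟨γ, hγ, hγ0⟩ := hΓ
    have hquot : γ * π ^ (1 : ℤ) * (1 - π)⁻¹ / (γ * π ^ (0 : ℤ) * (1 - π)⁻¹) = π := by
      field_simp
    exact hquot ▸ K.div_mem (hconst hγ 1) (hconst hγ 0)
  refine ⟨hπK, fun γ hγ => ?_⟩
  have hdigit : γ * π ^ (0 : ℤ) * (1 - π)⁻¹ * (1 - π) = γ := by
    rw [inv_mul_cancel_right₀ hne, zpow_zero, mul_one]
  exact hdigit ▸ K.mul_mem (hconst hγ 0) (K.sub_mem K.one_mem hπK)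

/-- If `(Γ, π)` has property A, then `π ∈ K` and every element of `Γ` lies in `K`. -/
theorem rational_of_propertyA
    {Kv : Type*} [Field Kv] [Valued Kv ZM0]
    (p : ℕ) [Fact p.Prime] (K : Subfield Kv)
    (hK : IsGlobalFunctionFieldCompletion p K)
    (π : Kv) (hπ0 : π ≠ 0) (hπ : Valued.v π < 1)
    (Γ : Set Kv) (hΓ : IsCompleteSetOfReps π Γ)
    (hA : HasPropertyA K π Γ) :
    π ∈ K ∧ Γ ⊆ (K : Set Kv) := by
  exact rational_of_propertyA_general hπ0 hπ (hΓ.exists_ne_zero hπ) fun x m a h => (hA x m a h).2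
end

section
/- Suppose π ∈ A and Γ ⊆ A. If [K : 𝔽_q(π)] > [K_v : 𝔽_q((π))], then (Γ, π) does not have property A. -/
/-!
Common setup: `Kv` is a complete field equipped with a (normalized, `ℤ`-valued)
valuation `Valued.v : Kv → ℤₘ₀ = WithZero (Multiplicative ℤ)`, and `K` is a dense
subfield of `Kv` (so that `Kv` is the completion `K_v` of `K`).  The valuation is
written multiplicatively: the additive valuation of `x` is `n` iff
`Valued.v x = ofAdd (-n)`; the valuation ring `A_v` is `{x | Valued.v x ≤ 1}` and
`π A_v = {x | Valued.v x ≤ Valued.v π}`.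
-/

open scoped Multiplicative

variable {Kv : Type*} [Field Kv] [Valued Kv ZM0]

/-!
Let `F = 𝔽_q(π)` and let `O` be the valuation ring of `F`. Summing the geometric series, an
ultimately periodic expansion `∑ aₙ πⁿ` lies in the `O`-span of `Γ`. Under property A, therefore,
`K ∩ A_v` is contained in the `O`-module generated by `Γ`. The set `Γ` is finite: `K` is finite
over `𝔽_p(π)`, and elements of `K ∩ A_v` that are linearly independent over `𝔽_p` modulo `π` are
linearly independent over `𝔽_p(π)`. Every `F`-linear functional `K → F` is then bounded on
`K ∩ A_v`, hence continuous, so that an `F`-basis of `K` remains linearly independent over the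
closure `𝔽_q((π))` of `F`. This gives `[K : 𝔽_q(π)] ≤ [K_v : 𝔽_q((π))]`.
-/

open Filter IntermediateField Polynomial Topology

section ResidueIndependence

variable {k L Γ₀ : Type*} [Field k] [Field L] [Algebra k L] [LinearOrderedCommGroupWithZero Γ₀]

variable (k) in
/-- The closed ball `{x | v x ≤ γ}` as a vector space over a field `k` of constants, so that
residues modulo it can be tested for `k`-linear independence. -/
def valuationBall (v : Valuation L Γ₀) [v.IsTrivialOn k] (γ : Γ₀) : Submodule k L where
  carrier := {x | v x ≤ γ}
  zero_mem' := by simp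
  add_mem' hx hy := (v.map_add _ _).trans (max_le hx hy)
  smul_mem' c x hx := by
    rw [Set.mem_ofPred_eq, Algebra.smul_def, map_mul]
    exact mul_le_of_le_one_of_le (Valuation.IsTrivialOn.valuation_algebraMap_le_one v c) hx

variable {v : Valuation L Γ₀} [v.IsTrivialOn k]

lemma mem_valuationBall {γ : Γ₀} {x : L} : x ∈ valuationBall k v γ ↔ v x ≤ γ := Iff.rfl

lemma valuation_aeval_le_one {π : L} (hπ : v π ≤ 1) (f : k[X]) : v (aeval π f) ≤ 1 := by
  rw [aeval_eq_sum_range]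
  refine v.map_sum_le fun i _ => ?_
  rw [Algebra.smul_def, map_mul, map_pow]
  exact mul_le_one' (Valuation.IsTrivialOn.valuation_algebraMap_le_one v _) (pow_le_one' hπ i)

variable {π : L} {ι : Type*} {y : ι → L}

lemma coeff_zero_eq_zero_of_sum_aeval_mul_eq_zero (hπ : v π ≤ 1) (hy : ∀ i, v (y i) ≤ 1)
    (hres : LinearIndependent k fun i => (valuationBall k v (v π)).mkQ (y i))
    {s : Finset ι} {f : ι → k[X]} (hf : ∑ i ∈ s, aeval π (f i) * y i = 0) :
    ∀ i ∈ s, (f i).coeff 0 = 0 := by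
  refine linearIndependent_iff'.mp hres s (fun i => (f i).coeff 0) ?_
  have hsplit : ∑ i ∈ s, (f i).coeff 0 • y i = -∑ i ∈ s, π * (aeval π (f i).divX * y i) := by
    rw [eq_neg_iff_add_eq_zero, ← Finset.sum_add_distrib, ← hf]
    refine Finset.sum_congr rfl fun i _ => ?_
    conv_rhs => rw [← divX_mul_X_add (f i)]
    simp only [map_add, map_mul, aeval_X, aeval_C, Algebra.smul_def]
    ring
  simp only [← map_smul, ← map_sum]
  rw [Submodule.mkQ_apply, Submodule.Quotient.mk_eq_zero, hsplit, mem_valuationBall,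
    Valuation.map_neg]
  refine v.map_sum_le fun i _ => ?_
  rw [map_mul, map_mul]
  exact mul_le_of_le_one_right' (mul_le_one' (valuation_aeval_le_one hπ _) (hy i))

lemma eq_zero_of_sum_aeval_mul_eq_zero (hπ0 : π ≠ 0) (hπ : v π ≤ 1) (hy : ∀ i, v (y i) ≤ 1)
    (hres : LinearIndependent k fun i => (valuationBall k v (v π)).mkQ (y i))
    {s : Finset ι} {f : ι → k[X]} (hf : ∑ i ∈ s, aeval π (f i) * y i = 0) :
    ∀ i ∈ s, f i = 0 := by
  suffices hdvd : ∀ n : ℕ, ∀ f : ι → k[X], ∑ i ∈ s, aeval π (f i) * y i = 0 →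
      ∀ i ∈ s, X ^ n ∣ f i by
    intro i hi
    ext m
    exact X_pow_dvd_iff.mp (hdvd (m + 1) f hf i hi) m m.lt_succ_self
  intro n
  induction n with
  | zero => simp
  | succ n ih =>
    intro f hf i hi
    have hcoeff := coeff_zero_eq_zero_of_sum_aeval_mul_eq_zero hπ hy hres hf
    have hdivX : ∀ i ∈ s, f i = (f i).divX * X := fun i hi => by
      conv_lhs => rw [← divX_mul_X_add (f i), hcoeff i hi, C_0, add_zero]
    have hsum : π * ∑ i ∈ s, aeval π (f i).divX * y i = 0 := by
      rw [← hf, Finset.mul_sum]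
      refine Finset.sum_congr rfl fun i hi => ?_
      conv_rhs => rw [hdivX i hi, map_mul, aeval_X]
      ring
    rw [hdivX i hi, pow_succ]
    exact mul_dvd_mul_right (ih _ ((mul_eq_zero_iff_left hπ0).mp hsum) i hi) X

open scoped IntermediateField.algebraAdjoinAdjoin in
lemma linearIndependent_adjoin_simple_of_linearIndependent_residue (hπ0 : π ≠ 0) (hπ : v π ≤ 1)
    (hy : ∀ i, v (y i) ≤ 1)
    (hres : LinearIndependent k fun i => (valuationBall k v (v π)).mkQ (y i)) :
    LinearIndependent k⟮π⟯ y := by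
  rw [← LinearIndependent.iff_fractionRing (Algebra.adjoin k {π}), linearIndependent_iff']
  intro s g hg i hi
  have hpoly (i : ι) : ∃ f : k[X], aeval π f = (g i : L) := by
    simpa [Algebra.adjoin_singleton_eq_range_aeval] using (g i).2
  choose f hf using hpoly
  have hsum : ∑ i ∈ s, aeval π (f i) * y i = 0 := by
    simpa only [hf, Subalgebra.smul_def, smul_eq_mul] using hg
  rw [← ZeroMemClass.coe_eq_zero, ← hf, eq_zero_of_sum_aeval_mul_eq_zero hπ0 hπ hy hres hsum i hi,
    map_zero]

end ResidueIndependence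

section FiniteResidues

variable {k K Γ₀ : Type*} [Field k] [Field K] [Algebra k K] [LinearOrderedCommGroupWithZero Γ₀]
  {π : K} [FiniteDimensional k⟮π⟯ K] {Γ : Set K}

variable (k) in
lemma finite_span_image_mkQ_valuationBall (v : Valuation K Γ₀) [v.IsTrivialOn k] (hπ0 : π ≠ 0)
    (hπ : v π ≤ 1) (hΓ : ∀ γ ∈ Γ, v γ ≤ 1) :
    Module.Finite k (Submodule.span k ((valuationBall k v (v π)).mkQ '' Γ)) := by
  rw [Set.image_eq_range]
  obtain ⟨κ, a, -, hspan, hres⟩ :=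
    exists_linearIndependent' k fun γ : Γ => (valuationBall k v (v π)).mkQ γ
  have : Finite κ := (linearIndependent_adjoin_simple_of_linearIndependent_residue
    hπ0 hπ (fun i => hΓ _ (a i).2) hres).finite
  rw [← hspan]
  exact Module.Finite.span_of_finite k (Set.finite_range _)

variable (k) in
lemma finite_of_pairwise_lt_valuation_sub [Finite k] (v : Valuation K Γ₀) (hπ0 : π ≠ 0)
    (hπ : v π ≤ 1) (hΓ : ∀ γ ∈ Γ, v γ ≤ 1) (hsep : Γ.Pairwise fun γ γ' => v π < v (γ - γ')) :
    Γ.Finite := by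
  have := finite_span_image_mkQ_valuationBall k v hπ0 hπ hΓ
  have : Finite (Submodule.span k ((valuationBall k v (v π)).mkQ '' Γ)) :=
    Module.finite_of_finite k
  have himage : ((valuationBall k v (v π)).mkQ '' Γ).Finite :=
    (Set.toFinite _).subset (Submodule.subset_span (R := k))
  refine himage.of_finite_image fun γ hγ γ' hγ' h => ?_
  by_contra hne
  exact (hsep hγ hγ' hne).not_ge ((Submodule.Quotient.eq _).mp h)

end FiniteResidues

section FunctionField

variable {k K L : Type*} [Field k] [Field K] [Algebra k K] [Field L]

lemma finiteDimensional_adjoin_simple_of_transcendental {x y : K} [FiniteDimensional k⟮x⟯ K]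
    (hx : Transcendental k x) (hy : Transcendental k y) : FiniteDimensional k⟮y⟯ K := by
  let e := RatFunc.algEquivOfTranscendental x hx
  let ratFuncEmbedding : RatFunc k →ₐ[k] K := k⟮x⟯.val.comp e.toAlgHom
  let : Algebra (RatFunc k) K := ratFuncEmbedding.toRingHom.toAlgebra
  have : IsScalarTower k (RatFunc k) K :=
    .of_algebraMap_eq fun c => (ratFuncEmbedding.commutes c).symm
  have : FunctionField k K :=
    Module.Finite.of_equiv_equiv e.symm.toRingEquiv (RingEquiv.refl K)
      (by ext; simp [RingHom.algebraMap_toAlgebra, ratFuncEmbedding])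
  exact FunctionField.finiteDimensional_of_adjoin_transcendental hy

lemma mem_span_subfield_iff {F K : Subfield L} (hFK : F ≤ K) {x : L} :
    x ∈ Submodule.span F (K : Set L) ↔ x ∈ K := by
  have hspan : Submodule.span F (K : Set L) = (Subfield.extendScalars hFK).toSubmodule :=
    Submodule.span_eq (Subfield.extendScalars hFK).toSubmodule
  rw [hspan]
  rfl

lemma finiteDimensional_adjoin_simple_of_finite_span_closure {K : Subfield L} [Algebra k K] {x : K}
    (hfin : Module.Finite (Subfield.closure {(x : L)})
      (Submodule.span (Subfield.closure {(x : L)}) (K : Set L))) : FiniteDimensional k⟮x⟯ K := by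
  have hmap : Subfield.closure {(x : L)} ≤ k⟮x⟯.toSubfield.map K.subtype :=
    Subfield.closure_le.mpr (Set.singleton_subset_iff.mpr ⟨x, mem_adjoin_simple_self k x, rfl⟩)
  have hle : Subfield.closure {(x : L)} ≤ K :=
    Subfield.closure_le.mpr (Set.singleton_subset_iff.mpr x.2)
  have hmem (c : Subfield.closure {(x : L)}) : Subfield.inclusion hle c ∈ k⟮x⟯ := by
    obtain ⟨y, hy, hyc⟩ := hmap c.2
    rwa [← show y = Subfield.inclusion hle c from Subtype.ext hyc]
  let toK : Submodule.span (Subfield.closure {(x : L)}) (K : Set L)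
      →ₛₗ[(Subfield.inclusion hle).codRestrict k⟮x⟯ hmem] K :=
    { toFun w := ⟨w, (mem_span_subfield_iff hle).mp w.2⟩
      map_add' _ _ := rfl
      map_smul' _ _ := rfl }
  exact Module.Finite.of_surjective toK fun y => ⟨⟨y, Submodule.subset_span y.2⟩, rfl⟩

lemma transcendental_zmod_of_transcendental_bot (p : ℕ) [Fact p.Prime] [CharP L p] {K : Subfield L}
    [Algebra (ZMod p) K] {x : K} (hx : Transcendental (⊥ : Subfield L) (x : L)) :
    Transcendental (ZMod p) x := fun hx' =>
  hx (hx'.ringHom_of_comp_eq (ZMod.castHom dvd_rfl (⊥ : Subfield L)) K.subtype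
    (RingHom.injective _) (Subsingleton.elim _ _))

end FunctionField

section ValuedTopology

variable {L Γ₀ : Type*} [Field L] [LinearOrderedCommGroupWithZero Γ₀] [MulArchimedean Γ₀]
  [Valued L Γ₀] {π : L}

lemma hasBasis_nhds_valuation_le_pow (hπ0 : π ≠ 0) (hπ : Valued.v π < 1) (x : L) :
    (𝓝 x).HasBasis (fun _ : ℕ => True) fun n => {y | Valued.v (y - x) ≤ Valued.v π ^ n} := by
  refine ⟨fun s => ⟨fun hs => ?_, fun ⟨n, _, hn⟩ => ?_⟩⟩
  · obtain ⟨γ, hγ⟩ := Valued.mem_nhds.mp hs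
    simp_rw [Valuation.restrict_lt_iff_lt_embedding] at hγ
    obtain ⟨n, hn⟩ := exists_pow_lt₀ hπ
      (Units.mk0 (MonoidWithZeroHom.ValueGroup₀.embedding γ.1) (by simp))
    exact ⟨n, trivial, fun y hy => hγ (hy.trans_lt hn)⟩
  · refine Valued.mem_nhds.mpr ⟨Units.mk0 (Valued.v.restrict (π ^ n)) (by simp [hπ0]), ?_⟩
    refine fun y hy => hn (le_of_lt ?_)
    simpa [← map_pow, Valuation.restrict_lt_iff] using hy

lemma hasSum_of_valuation_le_pow (hπ0 : π ≠ 0) (hπ : Valued.v π < 1) {f : ℕ → L} {x : L}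
    (hf : ∀ n, Valued.v (f n) ≤ Valued.v π ^ n)
    (hx : ∀ n, Valued.v (∑ i ∈ Finset.range n, f i - x) ≤ Valued.v π ^ n) : HasSum f x := by
  refine (hasBasis_nhds_valuation_le_pow hπ0 hπ x).tendsto_right_iff.mpr fun n _ => ?_
  filter_upwards [eventually_ge_atTop (Finset.range n)] with s hs
  have htail : Valued.v (∑ i ∈ s \ Finset.range n, f i) ≤ Valued.v π ^ n := by
    refine Valuation.map_sum_le _ fun i hi => (hf i).trans ?_
    exact pow_le_pow_right_of_le_one' hπ.le (by simpa using (Finset.mem_sdiff.mp hi).2)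
  rw [← Finset.sum_sdiff hs, add_sub_assoc]
  exact (Valuation.map_add _ _ _).trans (max_le htail (hx n))

lemma continuous_of_valuation_le_of_valuation_le_one {F : Subfield L} {V : Submodule F L}
    (hπ0 : π ≠ 0) (hπ : Valued.v π < 1) (hπF : π ∈ F) (φ : V →ₗ[F] F) {C : Γ₀} (hC0 : C ≠ 0)
    (hC : ∀ w : V, Valued.v (w : L) ≤ 1 → Valued.v (φ w : L) ≤ C) : Continuous φ := by
  have hbasis := hasBasis_nhds_valuation_le_pow hπ0 hπ 0
  refine continuous_induced_rng.mpr (continuous_of_continuousAt_zero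
    (F.subtype.toAddMonoidHom.comp φ.toAddMonoidHom) ?_)
  rw [ContinuousAt, map_zero, nhds_subtype_eq_comap]
  refine ((hbasis.comap _).tendsto_iff hbasis).mpr fun n _ => ?_
  obtain ⟨m, hm⟩ := exists_pow_lt₀ hπ (Units.mk0 (Valued.v π ^ n * C⁻¹) (by simp [hπ0, hC0]))
  refine ⟨m, trivial, fun w hw => ?_⟩
  have hπm : (⟨π, hπF⟩ : F) ^ m ≠ 0 := pow_ne_zero m (by simpa [Subtype.ext_iff] using hπ0)
  obtain ⟨u, rfl⟩ : ∃ u : V, w = (⟨π, hπF⟩ : F) ^ m • u := ⟨_, (smul_inv_smul₀ hπm w).symm⟩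
  have hu : Valued.v (u : L) ≤ 1 := by
    simpa [Subfield.smul_def, hπ0, zero_lt_iff] using hw
  have : Valued.v π ^ m * C ≤ Valued.v π ^ n := by
    simpa [← div_eq_mul_inv, le_div_iff₀ (zero_lt_iff.mpr hC0)] using hm.le
  simpa using (mul_le_mul_right (hC u hu) (Valued.v π ^ m)).trans this

end ValuedTopology

section PeriodicSeries

variable {R : Type*} [Ring R] [TopologicalSpace R] [IsTopologicalRing R] [T2Space R]

lemma mul_one_sub_pow_eq_sum_of_hasSum_of_periodic {a : ℕ → R} {ℓ : ℕ}
    (ha : Function.Periodic a ℓ) {r x : R} (hx : HasSum (fun n => a n * r ^ n) x) :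
    x * (1 - r ^ ℓ) = ∑ n ∈ Finset.range ℓ, a n * r ^ n := by
  have hshift : HasSum (fun n => a n * r ^ n * r ^ ℓ)
      (x - ∑ n ∈ Finset.range ℓ, a n * r ^ n) := by
    simpa only [ha _, pow_add, mul_assoc] using (hasSum_nat_add_iff' ℓ).mpr hx
  rw [mul_sub, mul_one, (hx.mul_right (r ^ ℓ)).unique hshift, sub_sub_cancel]

variable {L : Type*} [Field L] [TopologicalSpace L] [IsTopologicalRing L] [T2Space L]

lemma eq_sum_add_of_hasSum_of_eventually_periodic {a : ℕ → L} {N ℓ : ℕ}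
    (ha : ∀ n, N ≤ n → a (n + ℓ) = a n) {r x : L} (hr0 : r ≠ 0) (hr : 1 - r ^ ℓ ≠ 0)
    (hx : HasSum (fun n => a n * r ^ n) x) :
    x = ∑ n ∈ Finset.range N, a n * r ^ n +
      r ^ N * (1 - r ^ ℓ)⁻¹ * ∑ n ∈ Finset.range ℓ, a (n + N) * r ^ n := by
  have htail : HasSum (fun n => a (n + N) * r ^ n)
      ((x - ∑ n ∈ Finset.range N, a n * r ^ n) * (r ^ N)⁻¹) := by
    refine (((hasSum_nat_add_iff' N).mpr hx).mul_right (r ^ N)⁻¹).congr_fun fun n => ?_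
    rw [pow_add]
    field_simp
  have hperiodic : Function.Periodic (fun n => a (n + N)) ℓ := fun n => by
    simpa only [add_right_comm] using ha (n + N) (Nat.le_add_left N n)
  rw [← mul_one_sub_pow_eq_sum_of_hasSum_of_periodic hperiodic htail]
  field_simp
  ring

end PeriodicSeries

section ContinuousFunctionals

variable {L : Type*} [Field L] [TopologicalSpace L] [IsTopologicalDivisionRing L] [T2Space L]
  {F : Subfield L} {V : Submodule F L}

lemma linearIndependent_topologicalClosure_of_continuous (hV : ∀ φ : V →ₗ[F] F, Continuous φ)
    {ι : Type*} (b : Module.Basis ι F V) :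
    LinearIndependent F.topologicalClosure fun i => (b i : L) := by
  classical
  refine linearIndependent_iff'.mpr fun s g hg i₀ hi₀ => ?_
  let 𝓕 : Filter (ι → F) := Filter.pi fun i => comap Subtype.val (𝓝 (g i : L))
  have (i : ι) : (comap ((↑) : F → L) (𝓝 (g i : L))).NeBot :=
    mem_closure_iff_comap_neBot.mp (g i).2
  have hlim (i : ι) : Tendsto (fun r : ι → F => (r i : L)) 𝓕 (𝓝 (g i)) :=
    tendsto_comap.comp (tendsto_eval_pi _ i)
  let z (r : ι → F) : V := ∑ i ∈ s, r i • b i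
  have hz : Tendsto z 𝓕 (𝓝 0) := by
    rw [tendsto_subtype_rng]
    have : ∑ i ∈ s, (g i : L) * b i = 0 := hg
    simpa [z, Subfield.smul_def, this] using
      tendsto_finsetSum s fun i _ => (hlim i).mul_const (b i : L)
  have hcoord (r : ι → F) : b.coord i₀ (z r) = r i₀ := by
    simp only [z, map_sum, map_smul, Module.Basis.coord_apply, Module.Basis.repr_self,
      Finsupp.single_apply, smul_eq_mul, mul_ite, mul_one, mul_zero, Finset.sum_ite_eq', hi₀,
      if_pos]
  have hzero : Tendsto (fun r : ι → F => (r i₀ : L)) 𝓕 (𝓝 0) := by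
    have := (continuous_subtype_val.comp (hV (b.coord i₀))).tendsto 0 |>.comp hz
    simpa only [Function.comp_def, hcoord, map_zero, ZeroMemClass.coe_zero] using this
  exact Subtype.ext (tendsto_nhds_unique (hlim i₀) hzero)

lemma rank_le_rank_topologicalClosure_of_continuous (hV : ∀ φ : V →ₗ[F] F, Continuous φ) :
    Module.rank F V ≤ Module.rank F.topologicalClosure L := by
  let b := Module.Basis.ofVectorSpace F V
  rw [← b.mk_eq_rank'']
  exact (linearIndependent_topologicalClosure_of_continuous hV b).cardinal_le_rank

end ContinuousFunctionals

section BoundedFunctionals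

variable {F V Γ₀ : Type*} [Field F] [AddCommGroup V] [Module F V]
  [LinearOrderedCommGroupWithZero Γ₀]

lemma exists_valuation_le_of_mem_span_integer (v : Valuation F Γ₀) {Γ : Set V} (hΓ : Γ.Finite)
    (φ : V →ₗ[F] F) :
    ∃ C : Γ₀, C ≠ 0 ∧ ∀ w ∈ Submodule.span v.integer Γ, v (φ w) ≤ C := by
  obtain ⟨B, hB⟩ := (hΓ.image fun w => v (φ w)).bddAbove
  refine ⟨max B 1, (zero_lt_one.trans_le (le_max_right B 1)).ne', fun w hw => ?_⟩
  induction hw using Submodule.span_induction with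
  | mem w hw => exact (hB ⟨w, hw, rfl⟩).trans (le_max_left B 1)
  | zero => simp
  | add w w' _ _ hw hw' =>
    rw [map_add]
    exact (v.map_add _ _).trans (max_le hw hw')
  | smul c w _ hw =>
    rw [Subring.smul_def, map_smul, smul_eq_mul, map_mul]
    exact mul_le_of_le_one_of_le c.2 hw

end BoundedFunctionals

section DigitExpansion

variable {π : Kv} {Γ : Set Kv}

namespace IsCompleteSetOfReps

lemma exists_eq_add_mul (hΓ : IsCompleteSetOfReps π Γ) (hπ0 : π ≠ 0) {x : Kv}
    (hx : Valued.v x ≤ 1) : ∃ γ ∈ Γ, ∃ y, Valued.v y ≤ 1 ∧ x = γ + π * y := by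
  obtain ⟨γ, ⟨hγ, hxγ⟩, -⟩ := hΓ.2 x hx
  refine ⟨γ, hγ, (x - γ) / π, ?_, by field_simp; ring⟩
  rw [map_div₀]
  exact div_le_one_of_le₀ hxγ zero_le

lemma exists_digits (hΓ : IsCompleteSetOfReps π Γ) (hπ0 : π ≠ 0) {x : Kv}
    (hx : Valued.v x ≤ 1) : ∃ a : ℕ → Kv, (∀ n, a n ∈ Γ) ∧
      ∀ n, Valued.v (∑ i ∈ Finset.range n, a i * π ^ i - x) ≤ Valued.v π ^ n := by
  choose digit hdigit next hnext heq using
    fun y : {y : Kv // Valued.v y ≤ 1} => hΓ.exists_eq_add_mul hπ0 y.2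
  let r (n : ℕ) : {y : Kv // Valued.v y ≤ 1} := (fun y => ⟨next y, hnext y⟩)^[n] ⟨x, hx⟩
  have hr (n : ℕ) : (r n : Kv) = digit (r n) + π * r (n + 1) := by
    simpa only [r, Function.iterate_succ_apply'] using heq (r n)
  have hremainder (n : ℕ) : ∑ i ∈ Finset.range n, digit (r i) * π ^ i - x = -(π ^ n * r n) := by
    induction n with
    | zero => simp [r]
    | succ n ih =>
      rw [Finset.sum_range_succ, add_sub_right_comm, ih, hr n]
      ring
  refine ⟨fun n => digit (r n), fun n => hdigit _, fun n => ?_⟩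
  rw [hremainder, Valuation.map_neg, map_mul, map_pow]
  exact mul_le_of_le_one_right' (r n).2

lemma exists_isExpansion (hΓ : IsCompleteSetOfReps π Γ) (hπ0 : π ≠ 0) (hπ : Valued.v π < 1)
    {x : Kv} (hx : Valued.v x ≤ 1) : ∃ a : ℤ → Kv, IsExpansion π Γ 0 a x := by
  obtain ⟨a, ha, hax⟩ := hΓ.exists_digits hπ0 hx
  have hsum : HasSum (fun n => a n * π ^ n) x := by
    refine hasSum_of_valuation_le_pow hπ0 hπ (fun n => ?_) hax
    rw [map_mul, map_pow]
    exact mul_le_of_le_one_left' (hΓ.1 _ (ha n))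
  exact ⟨fun n => a n.toNat, fun n _ => ha _, by simpa using hsum⟩

end IsCompleteSetOfReps

variable {F : Subfield Kv}

lemma mul_mem_span_integer {c y : Kv} (hcF : c ∈ F) (hc : Valued.v c ≤ 1)
    (hy : y ∈ Submodule.span (Valued.v.comap F.subtype).integer Γ) :
    c * y ∈ Submodule.span (Valued.v.comap F.subtype).integer Γ :=
  Submodule.smul_mem _ (⟨⟨c, hcF⟩, hc⟩ : (Valued.v.comap F.subtype).integer) hy

lemma sum_mul_pow_mem_span_integer (hπ : Valued.v π ≤ 1) (hπF : π ∈ F) {a : ℕ → Kv}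
    (ha : ∀ n, a n ∈ Γ) (N : ℕ) : ∑ n ∈ Finset.range N, a n * π ^ n ∈
      Submodule.span (Valued.v.comap F.subtype).integer Γ := by
  refine Submodule.sum_mem _ fun n _ => ?_
  rw [mul_comm]
  refine mul_mem_span_integer (pow_mem hπF n) ?_ (Submodule.subset_span (ha n))
  rw [map_pow]
  exact pow_le_one' hπ n

lemma IsExpansion.mem_span_integer_of_ultimatelyPeriodic {a : ℤ → Kv} {x : Kv}
    (hax : IsExpansion π Γ 0 a x) (ha : UltimatelyPeriodic 0 a) (hπ0 : π ≠ 0)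
    (hπ : Valued.v π < 1) (hπF : π ∈ F) :
    x ∈ Submodule.span (Valued.v.comap F.subtype).integer Γ := by
  obtain ⟨N, ℓ, hN, hℓ, hperiod⟩ := ha
  lift N to ℕ using hN
  lift ℓ to ℕ using hℓ.le
  have hvℓ : Valued.v (1 - π ^ ℓ) = 1 := by
    refine Valuation.map_one_sub_of_lt _ ?_
    rw [map_pow]
    exact pow_lt_one₀ zero_le hπ (by lia)
  have hne : 1 - π ^ ℓ ≠ 0 := (Valuation.ne_zero_iff _).mp (hvℓ ▸ one_ne_zero)
  have hsum : HasSum (fun n : ℕ => a n * π ^ n) x := by simpa using hax.2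
  have hmem (n : ℕ) : a n ∈ Γ := hax.1 n n.cast_nonneg
  have hperiod_nat (n : ℕ) (hn : N ≤ n) : a (n + ℓ : ℕ) = a n := by
    simpa using hperiod n (by exact_mod_cast hn)
  rw [eq_sum_add_of_hasSum_of_eventually_periodic hperiod_nat hπ0 hne hsum]
  refine add_mem (sum_mul_pow_mem_span_integer hπ.le hπF hmem N) (mul_mem_span_integer ?_ ?_
    (sum_mul_pow_mem_span_integer hπ.le hπF (fun n => hmem (n + N)) ℓ))
  · exact mul_mem (pow_mem hπF N) (inv_mem (sub_mem (one_mem F) (pow_mem hπF ℓ)))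
  · rw [map_mul, map_inv₀, hvℓ, map_pow, inv_one, mul_one]
    exact pow_le_one' hπ.le N

variable {K : Subfield Kv}

lemma HasPropertyA.mem_span_integer (hA : HasPropertyA K π Γ) (hΓ : IsCompleteSetOfReps π Γ)
    (hπ0 : π ≠ 0) (hπ : Valued.v π < 1) (hπF : π ∈ F) {x : Kv} (hxK : x ∈ K)
    (hx : Valued.v x ≤ 1) : x ∈ Submodule.span (Valued.v.comap F.subtype).integer Γ := by
  obtain ⟨a, ha⟩ := hΓ.exists_isExpansion hπ0 hπ hx
  exact ha.mem_span_integer_of_ultimatelyPeriodic ((hA x 0 a ha).mp hxK) hπ0 hπ hπF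

end DigitExpansion

section GeneralSubfield

variable {π : Kv} {Γ : Set Kv} {F K : Subfield Kv}

lemma HasPropertyA.continuous_linearMap (hA : HasPropertyA K π Γ) (hΓ : IsCompleteSetOfReps π Γ)
    (hπ0 : π ≠ 0) (hπ : Valued.v π < 1) (hΓfin : Γ.Finite) (hΓK : Γ ⊆ (K : Set Kv)) (hπF : π ∈ F)
    (hFK : F ≤ K) (φ : Submodule.span F (K : Set Kv) →ₗ[F] F) : Continuous φ := by
  let V := Submodule.span F (K : Set Kv)
  let Γ' : Set V := (↑) ⁻¹' Γ
  obtain ⟨C, hC0, hC⟩ := exists_valuation_le_of_mem_span_integer (Valued.v.comap F.subtype)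
    (hΓfin.preimage Subtype.val_injective.injOn : Γ'.Finite) φ
  refine continuous_of_valuation_le_of_valuation_le_one hπ0 hπ hπF φ hC0 fun w hw => hC w ?_
  let incl : V →ₗ[(Valued.v.comap F.subtype).integer] Kv := V.subtype.restrictScalars _
  have himage : incl '' Γ' = Γ :=
    (Subtype.image_preimage_coe _ _).trans
      (Set.inter_eq_right.mpr (hΓK.trans Submodule.subset_span))
  have hmem := hA.mem_span_integer hΓ hπ0 hπ hπF ((mem_span_subfield_iff hFK).mp w.2) hw
  rw [← himage, ← Submodule.map_span] at hmem
  exact (Function.Injective.mem_set_image Subtype.val_injective).mp hmem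

theorem not_propertyA_of_degree_gt_general (hπ0 : π ≠ 0) (hπ : Valued.v π < 1)
    (hΓ : IsCompleteSetOfReps π Γ) (hΓfin : Γ.Finite) (hΓK : Γ ⊆ (K : Set Kv)) (hπF : π ∈ F)
    (hFK : F ≤ K) (hdeg : Module.rank F.topologicalClosure Kv < degOver F (K : Set Kv)) :
    ¬ HasPropertyA K π Γ := fun hA =>
  hdeg.not_ge <| rank_le_rank_topologicalClosure_of_continuous <|
    hA.continuous_linearMap hΓ hπ0 hπ hΓfin hΓK hπF hFK

end GeneralSubfield

section GlobalFunctionField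

variable {p : ℕ} {K : Subfield Kv} {π : Kv} {Γ : Set Kv}

lemma IsCompleteSetOfReps.pairwise_lt_valuation_sub (hΓ : IsCompleteSetOfReps π Γ) :
    Γ.Pairwise fun γ γ' => Valued.v π < Valued.v (γ - γ') := fun γ hγ γ' hγ' hne => by
  by_contra! hle
  exact hne ((hΓ.2 γ (hΓ.1 γ hγ)).unique ⟨hγ, by simp⟩ ⟨hγ', hle⟩)

lemma IsGlobalFunctionFieldCompletion.finite_of_isCompleteSetOfReps [Fact p.Prime]
    (hK : IsGlobalFunctionFieldCompletion p K) (hΓ : IsCompleteSetOfReps π Γ) (hπ0 : π ≠ 0)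
    (hπ : Valued.v π < 1) (hπK : π ∈ K) (hΓK : Γ ⊆ (K : Set Kv)) : Γ.Finite := by
  obtain ⟨x, hxK, hx, hdeg⟩ := hK.globalFunctionField
  have := hK.charP
  let : Algebra (ZMod p) K := ZMod.algebra K p
  lift π to K using hπK
  lift x to K using hxK
  let v : Valuation K ZM0 := Valued.v.comap K.subtype
  have hπ0' : π ≠ 0 := by simpa using hπ0
  have : FiniteDimensional (ZMod p)⟮x⟯ K :=
    finiteDimensional_adjoin_simple_of_finite_span_closure (Module.rank_lt_aleph0_iff.mp hdeg)
  have : FiniteDimensional (ZMod p)⟮π⟯ K :=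
    finiteDimensional_adjoin_simple_of_transcendental
      (transcendental_zmod_of_transcendental_bot p hx)
      (v.transcendental_of_ne_one (ZMod p) π hπ0' hπ.ne)
  have hfin : ((↑) ⁻¹' Γ : Set K).Finite :=
    finite_of_pairwise_lt_valuation_sub (ZMod p) v hπ0' hπ.le (fun γ hγ => hΓ.1 γ hγ)
      fun γ hγ γ' hγ' hne =>
        hΓ.pairwise_lt_valuation_sub hγ hγ' (Subtype.coe_injective.ne hne)
  rw [← Set.inter_eq_right.mpr hΓK, ← Subtype.image_preimage_coe]
  exact hfin.image _

end GlobalFunctionField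

section FqPi

variable {L : Type*} [Field L] {p : ℕ} {K : Subfield L} {π : L}

lemma self_mem_FqPi : π ∈ FqPi p K π :=
  Subfield.subset_closure (Set.mem_union_right _ rfl)

lemma FqPi_le (hπK : π ∈ K) : FqPi p K π ≤ K :=
  Subfield.closure_le.mpr (Set.union_subset (fun _ hx => hx.1) (Set.singleton_subset_iff.mpr hπK))

end FqPi

/-- **Lemma 2.1.** Suppose `π ∈ A` and `Γ ⊆ A` (all rational, i.e. in `K`).
If `[K : 𝔽_q(π)] > [K_v : 𝔽_q((π))]`, then `(Γ, π)` cannot have property A. -/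
theorem not_propertyA_of_degree_gt
    {Kv : Type*} [Field Kv] [Valued Kv ZM0]
    (p : ℕ) [Fact p.Prime] (K : Subfield Kv)
    (hK : IsGlobalFunctionFieldCompletion p K)
    (π : Kv) (hπ0 : π ≠ 0) (hπ : Valued.v π < 1)
    (Γ : Set Kv) (hΓ : IsCompleteSetOfReps π Γ)
    (hπK : π ∈ K) (hΓK : Γ ⊆ (K : Set Kv))
    (hdeg : Module.rank ↥(FqPiCompletion p K π) Kv <
      degOver (FqPi p K π) (K : Set Kv)) :
    ¬ HasPropertyA K π Γ := by
  exact not_propertyA_of_degree_gt_general hπ0 hπ hΓ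
    (hK.finite_of_isCompleteSetOfReps hΓ hπ0 hπ hπK hΓK) hΓK self_mem_FqPi (FqPi_le hπK) hdeg
end

section
/- Suppose π ∈ A and [K : 𝔽_q(π)] = [K_v : 𝔽_q((π))]. Let α₁, …, α_{ef} ∈ A be elements whose reductions modulo πA are linearly independent over 𝔽_q (here e = v(π), f is the residue degree, and dim_{𝔽_q} A/πA = ef), and let Γ = 𝔽_q·α₁ + ⋯ + 𝔽_q·α_{ef} = {c₁α₁ + ⋯ + c_{ef}α_{ef} : cᵢ ∈ 𝔽_q}. Then Γ is a complete set of representatives of A_v/πA_v and (Γ, π) has property A. -/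
/-!
Common setup: `Kv` is a complete field equipped with a (normalized, `ℤ`-valued)
valuation `Valued.v : Kv → ℤₘ₀ = WithZero (Multiplicative ℤ)`, and `K` is a dense
subfield of `Kv` (so that `Kv` is the completion `K_v` of `K`).  The valuation is
written multiplicatively: the additive valuation of `x` is `n` iff
`Valued.v x = ofAdd (-n)`; the valuation ring `A_v` is `{x | Valued.v x ≤ 1}` and
`π A_v = {x | Valued.v x ≤ Valued.v π}`.
-/

open scoped Multiplicative

variable {Kv : Type*} [Field Kv] [Valued Kv ZM0]

/-!
Let `k` be a field algebraic over a finite field. Every nonzero `Q ∈ k[X]` divides some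
`X ^ M - X ^ N` with `N < M`, because the powers of the root of `Q` in `k[X] / (Q)` repeat.

Let `Γ` be the `k`-span of the family `α`. It is closed under subtraction, and an expansion in
powers of `π` with digits in `Γ` is unique. Uniqueness makes `α` linearly independent over `k(π)`,
and completeness makes it span `Kv` over `k((π))`, so the equality of degrees forces
`K = ⨁ k(π) α i`. Hence for `x ∈ K` some `(π ^ M - π ^ N) * x` is a polynomial in `π` with
coefficients in `Γ`, and comparing digits shows that those of `x` are ultimately periodic with
period `M - N`. Conversely, if the digits of `x` ultimately have period `L`, then
`(1 - π ^ L) * x` is a finite sum of elements of `K`.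
-/

open Filter Topology Polynomial IntermediateField

theorem exists_pow_eq_pow_of_isIntegral {F₀ R : Type*} [CommRing F₀] [Finite F₀] [CommRing R]
    [Algebra F₀ R] {x : R} (hx : IsIntegral F₀ x) : ∃ M N : ℕ, N < M ∧ x ^ M = x ^ N := by
  have : Module.Finite F₀ (Algebra.adjoin F₀ {x}) := .of_fg hx.fg_adjoin_singleton
  have : Finite (Algebra.adjoin F₀ {x}) := Module.finite_of_finite F₀
  let generator : Algebra.adjoin F₀ {x} := ⟨x, Algebra.self_mem_adjoin_singleton F₀ x⟩
  obtain ⟨M, N, hpow, hne⟩ :=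
    Function.not_injective_iff.1 (not_injective_infinite_finite fun n : ℕ => generator ^ n)
  have hpow' : x ^ M = x ^ N := congrArg Subtype.val hpow
  exact hne.lt_or_gt.elim (fun h => ⟨N, M, h, hpow'.symm⟩) fun h => ⟨M, N, h, hpow'⟩

theorem exists_dvd_X_pow_sub_X_pow (F₀ : Type*) [Field F₀] [Finite F₀] {k : Type*} [Field k]
    [Algebra F₀ k] [Algebra.IsAlgebraic F₀ k] {Q : k[X]} (hQ : Q ≠ 0) :
    ∃ M N : ℕ, N < M ∧ Q ∣ X ^ M - X ^ N := by
  have hroot : IsIntegral F₀ (AdjoinRoot.root Q) :=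
    isIntegral_trans _ (AdjoinRoot.isIntegral_root hQ)
  obtain ⟨M, N, hlt, hpow⟩ := exists_pow_eq_pow_of_isIntegral hroot
  refine ⟨M, N, hlt, AdjoinRoot.mk_eq_zero.1 ?_⟩
  rw [map_sub, map_pow, map_pow, AdjoinRoot.mk_X, hpow, sub_self]

theorem valuation_algebraMap_le_one (F₀ : Type*) [Field F₀] [Finite F₀] {k E Γ₀ : Type*} [Field k]
    [Algebra F₀ k] [Algebra.IsAlgebraic F₀ k] [Field E] [Algebra k E]
    [LinearOrderedCommGroupWithZero Γ₀] (v : Valuation E Γ₀) (c : k) :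
    v (algebraMap k E c) ≤ 1 := by
  obtain ⟨M, N, hlt, hpow⟩ :=
    exists_pow_eq_pow_of_isIntegral (Algebra.IsIntegral.isIntegral (R := F₀) c)
  by_contra! hgt
  refine (pow_lt_pow_right₀ hgt hlt).ne ?_
  rw [← map_pow, ← map_pow, ← map_pow, ← map_pow, hpow]

section RationalFunctions

variable {k E : Type*} [Field k] [Field E] [Algebra k E] {π : E} {ι : Type*}

theorem exists_common_denominator_adjoin_simple [Finite ι] {z : ι → E} (hz : ∀ i, z i ∈ k⟮π⟯) :
    ∃ (Q : k[X]) (P : ι → k[X]), aeval π Q ≠ 0 ∧ ∀ i, aeval π Q * z i = aeval π (P i) := by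
  open scoped algebraAdjoinAdjoin in
  obtain ⟨⟨⟨q, hq⟩, hq0⟩, hint⟩ := IsLocalization.exist_integer_multiples_of_finite
    (nonZeroDivisors (Algebra.adjoin k {π})) fun i => (⟨z i, hz i⟩ : k⟮π⟯)
  choose r hr using hint
  have hmem (y : Algebra.adjoin k {π}) : ∃ P : k[X], aeval π P = y := by
    rw [← AlgHom.mem_range, ← Algebra.adjoin_singleton_eq_range_aeval]
    exact y.2
  obtain ⟨Q, hQ⟩ := hmem ⟨q, hq⟩
  choose P hP using fun i => hmem (r i)
  refine ⟨Q, P, ?_, fun i => ?_⟩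
  · rw [hQ]
    exact fun h => nonZeroDivisors.ne_zero hq0 (Subtype.ext h)
  · rw [hQ, hP]
    exact (congrArg Subtype.val (hr i)).symm

theorem exists_eval_eq_sum_aeval_mul [Fintype ι] (P : ι → k[X]) (α : ι → E) (π : E) :
    ∃ B : E[X], (∀ n, B.coeff n = ∑ i, (P i).coeff n • α i) ∧
      B.eval π = ∑ i, aeval π (P i) * α i := by
  refine ⟨∑ i, (P i).map (algebraMap k E) * C (α i), fun n => ?_, ?_⟩
  · simp only [finsetSum_coeff, coeff_mul_C, coeff_map, Algebra.smul_def]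
  · simp only [eval_finsetSum, eval_mul, eval_C, eval_map_algebraMap]

-- Clear denominators, then multiply the denominator `Q` up to some `X ^ M - X ^ N`.
theorem exists_eval_eq_pow_sub_pow_mul (F₀ : Type*) [Field F₀] [Finite F₀] [Algebra F₀ k]
    [Algebra.IsAlgebraic F₀ k] [Finite ι] {α : ι → E} {x : E}
    (hx : x ∈ Submodule.span k⟮π⟯ (Set.range α)) :
    ∃ (M N : ℕ) (B : E[X]), N < M ∧ (∀ n, B.coeff n ∈ Submodule.span k (Set.range α)) ∧
      B.eval π = (π ^ M - π ^ N) * x := by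
  cases nonempty_fintype ι
  obtain ⟨z, rfl⟩ := (Submodule.mem_span_range_iff_exists_fun _).1 hx
  obtain ⟨Q, P, hQ, hP⟩ := exists_common_denominator_adjoin_simple fun i => (z i).2
  obtain ⟨M, N, hlt, T, hT⟩ :=
    exists_dvd_X_pow_sub_X_pow F₀ (Q := Q) fun h => hQ (by rw [h, map_zero])
  obtain ⟨B, hcoeff, heval⟩ := exists_eval_eq_sum_aeval_mul (fun i => T * P i) α π
  refine ⟨M, N, B, hlt, fun n => ?_, ?_⟩
  · rw [hcoeff]
    exact Submodule.sum_smul_mem _ _ fun i _ => Submodule.subset_span ⟨i, rfl⟩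
  · have hpow : π ^ M - π ^ N = aeval π Q * aeval π T := by
      rw [← map_mul, ← hT, map_sub, map_pow, map_pow, aeval_X]
    rw [heval, hpow, Finset.mul_sum]
    refine Finset.sum_congr rfl fun i _ => ?_
    rw [map_mul, ← hP, IntermediateField.smul_def, smul_eq_mul]
    ring

end RationalFunctions

section PowerSeries

variable {E : Type*} [Field E] [TopologicalSpace E]

theorem hasSum_coeff_mul_pow (B : E[X]) (π : E) :
    HasSum (fun n => B.coeff n * π ^ n) (B.eval π) := by
  rw [eval_eq_sum_range]
  refine hasSum_sum_of_ne_finset_zero fun n hn => ?_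
  rw [coeff_eq_zero_of_natDegree_lt (by simpa using hn), zero_mul]

variable [IsTopologicalRing E] {π x : E} {a : ℕ → E}

theorem hasSum_digits_shift (h : HasSum (fun n => a n * π ^ n) x) (N : ℕ) :
    HasSum (fun n => (if N ≤ n then a (n - N) else 0) * π ^ n) (π ^ N * x) := by
  rw [← hasSum_nat_add_iff' N, Finset.sum_eq_zero, sub_zero]
  · refine (h.mul_left (π ^ N)).congr_fun fun n => ?_
    rw [if_pos (Nat.le_add_left N n), Nat.add_sub_cancel, pow_add]
    ring
  · intro n hn
    rw [if_neg (not_le.2 (Finset.mem_range.1 hn)), zero_mul]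

theorem hasSum_digits_shift_sub (h : HasSum (fun n => a n * π ^ n) x) (M N : ℕ) :
    HasSum (fun n => ((if M ≤ n then a (n - M) else 0) - if N ≤ n then a (n - N) else 0) * π ^ n)
      ((π ^ M - π ^ N) * x) := by
  simpa only [sub_mul] using (hasSum_digits_shift h M).sub (hasSum_digits_shift h N)

theorem hasSum_digits_tail (hπ0 : π ≠ 0) (h : HasSum (fun n => a n * π ^ n) x) :
    HasSum (fun n => a (n + 1) * π ^ n) ((x - a 0) / π) := by
  have htail := ((hasSum_nat_add_iff' 1).2 h).div_const π
  simp only [Finset.range_one, Finset.sum_singleton, pow_zero, mul_one, pow_succ] at htail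
  simpa only [← mul_assoc, mul_div_cancel_right₀ _ hπ0] using htail

-- Periodicity makes `(1 - π ^ L) * x` a finite sum.
theorem mem_of_hasSum_of_eventually_periodic [T2Space E] {K : Subfield E} (hπK : π ∈ K)
    (ha : ∀ n, a n ∈ K) (h : HasSum (fun n => a n * π ^ n) x) {L : ℕ} (hπL : π ^ L ≠ 1)
    (hper : ∀ᶠ n in atTop, a (n + L) = a n) : x ∈ K := by
  obtain ⟨N, hN⟩ := eventually_atTop.1 hper
  have hdiff := hasSum_digits_shift_sub h 0 L
  have hfinite := hdiff.unique <| hasSum_sum_of_ne_finset_zero (s := Finset.range (N + L))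
    fun n hn => by
      have hle : N + L ≤ n := by simpa using hn
      have := hN (n - L) (by omega)
      rw [Nat.sub_add_cancel (by omega)] at this
      rw [if_pos n.zero_le, if_pos (by omega), Nat.sub_zero, this, sub_self, zero_mul]
  have hne : π ^ 0 - π ^ L ≠ 0 := by rwa [pow_zero, sub_ne_zero, ne_comm]
  have hshift (j n : ℕ) : (if j ≤ n then a (n - j) else 0) ∈ K := by
    split_ifs
    exacts [ha _, zero_mem K]
  have hmul : (π ^ 0 - π ^ L) * x ∈ K := by
    rw [hfinite]
    exact sum_mem fun n _ => mul_mem (sub_mem (hshift 0 n) (hshift L n)) (pow_mem hπK n)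
  rw [← mul_div_cancel_left₀ x hne]
  exact div_mem hmul (sub_mem (pow_mem hπK 0) (pow_mem hπK L))

end PowerSeries

section Valued

variable {E Γ₀ : Type*} [Field E] [LinearOrderedCommGroupWithZero Γ₀] [Valued E Γ₀] {π x : E}
  {a : ℕ → E}

theorem valuation_le_one_of_hasSum (hπ : Valued.v π ≤ 1) (ha : ∀ n, Valued.v (a n) ≤ 1)
    (h : HasSum (fun n => a n * π ^ n) x) : Valued.v x ≤ 1 := by
  refine (Valued.isClosed_integer E).mem_of_tendsto h (.of_forall fun t => ?_)
  refine Valuation.map_sum_le _ fun n _ => ?_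
  rw [map_mul, map_pow]
  exact mul_le_one' (ha n) (pow_le_one' hπ n)

theorem head_digit_eq_zero_of_hasSum_zero {Γ : Set E} (hπ0 : π ≠ 0) (hπ : Valued.v π ≤ 1)
    (hΓ : ∀ γ ∈ Γ, Valued.v γ ≤ 1) (hΓπ : ∀ γ ∈ Γ, Valued.v γ ≤ Valued.v π → γ = 0)
    (ha : ∀ n, a n ∈ Γ) (h : HasSum (fun n => a n * π ^ n) 0) : a 0 = 0 := by
  refine hΓπ _ (ha 0) ?_
  have htail := valuation_le_one_of_hasSum hπ (fun n => hΓ _ (ha (n + 1)))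
    (hasSum_digits_tail hπ0 h)
  rwa [zero_sub, map_div₀, Valuation.map_neg,
    div_le_one₀ (zero_lt_iff.2 ((Valuation.ne_zero_iff _).2 hπ0))] at htail

theorem digits_eq_zero_of_hasSum_zero {Γ : Set E} (hπ0 : π ≠ 0) (hπ : Valued.v π ≤ 1)
    (hΓ : ∀ γ ∈ Γ, Valued.v γ ≤ 1) (hΓπ : ∀ γ ∈ Γ, Valued.v γ ≤ Valued.v π → γ = 0)
    (ha : ∀ n, a n ∈ Γ) (h : HasSum (fun n => a n * π ^ n) 0) (n : ℕ) : a n = 0 := by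
  induction n generalizing a with
  | zero => exact head_digit_eq_zero_of_hasSum_zero hπ0 hπ hΓ hΓπ ha h
  | succ _ ih =>
    refine ih (a := fun n => a (n + 1)) (fun n => ha (n + 1)) ?_
    simpa only [head_digit_eq_zero_of_hasSum_zero hπ0 hπ hΓ hΓπ ha h, sub_zero, zero_div]
      using hasSum_digits_tail hπ0 h

-- The digits of `(π ^ M - π ^ N) * x` vanish beyond the degree of `B`.
theorem eventually_periodic_of_eval_eq_pow_sub_pow_mul {Γ : AddSubgroup E} (hπ0 : π ≠ 0)
    (hπ : Valued.v π ≤ 1) (hΓ : ∀ γ ∈ Γ, Valued.v γ ≤ 1)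
    (hΓπ : ∀ γ ∈ Γ, Valued.v γ ≤ Valued.v π → γ = 0) (ha : ∀ n, a n ∈ Γ)
    (h : HasSum (fun n => a n * π ^ n) x) {B : E[X]} (hB : ∀ n, B.coeff n ∈ Γ) {M N : ℕ}
    (hNM : N < M) (heval : B.eval π = (π ^ M - π ^ N) * x) :
    ∀ᶠ n in atTop, a (n + (M - N)) = a n := by
  have hdiff := (hasSum_digits_shift_sub h M N).sub (hasSum_coeff_mul_pow B π)
  simp only [← sub_mul, heval, sub_self] at hdiff
  have hshift (L n : ℕ) : (if L ≤ n then a (n - L) else 0) ∈ Γ := by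
    split_ifs
    exacts [ha _, zero_mem Γ]
  have hdigits := digits_eq_zero_of_hasSum_zero (Γ := Γ) hπ0 hπ hΓ hΓπ
    (fun n => sub_mem (sub_mem (hshift M n) (hshift N n)) (hB n)) hdiff
  filter_upwards [eventually_gt_atTop B.natDegree] with n hn
  have hdigit := hdigits (n + M)
  rw [coeff_eq_zero_of_natDegree_lt (hn.trans_le (Nat.le_add_right n M)), sub_zero,
    if_pos (Nat.le_add_left M n), if_pos (by lia), Nat.add_sub_cancel, sub_eq_zero,
    Nat.add_sub_assoc hNM.le] at hdigit
  exact hdigit.symm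

theorem nonarchimedeanRing_of_valued_s3 : NonarchimedeanRing E :=
  (Valued.toUniformSpace_eq E Γ₀).symm ▸ Valued.v.subgroups_basis.nonarchimedean

theorem tendsto_digits_mul_pow [MulArchimedean Γ₀] (hπ : Valued.v π < 1)
    (ha : ∀ n, Valued.v (a n) ≤ 1) : Tendsto (fun n => a n * π ^ n) atTop (𝓝 0) := by
  have hpow := Valued.tendsto_zero_pow_of_v_lt_one hπ
  rw [(Valued.hasBasis_nhds_zero E Γ₀).tendsto_right_iff] at hpow ⊢
  intro γ hγ
  filter_upwards [hpow γ hγ] with n hn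
  refine lt_of_le_of_lt ?_ hn
  rw [Valuation.restrict_le_iff, map_mul]
  exact mul_le_of_le_one_left' (ha n)

theorem summable_digits_mul_pow [MulArchimedean Γ₀] [CompleteSpace E] (hπ : Valued.v π < 1)
    (ha : ∀ n, Valued.v (a n) ≤ 1) : Summable fun n => a n * π ^ n := by
  have := nonarchimedeanRing_of_valued_s3 (E := E)
  refine NonarchimedeanAddGroup.summable_of_tendsto_cofinite_zero ?_
  rw [Nat.cofinite_eq_atTop]
  exact tendsto_digits_mul_pow hπ ha

theorem exists_hasSum_digits [MulArchimedean Γ₀] [CompleteSpace E] {Γ : Set E} (hπ0 : π ≠ 0)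
    (hπ : Valued.v π < 1) (hΓ : ∀ γ ∈ Γ, Valued.v γ ≤ 1)
    (hrep : ∀ x : E, Valued.v x ≤ 1 → ∃ γ ∈ Γ, Valued.v (x - γ) ≤ Valued.v π)
    (hx : Valued.v x ≤ 1) :
    ∃ a : ℕ → E, (∀ n, a n ∈ Γ) ∧ HasSum (fun n => a n * π ^ n) x := by
  choose digit hdigit hclose using fun y : {y : E // Valued.v y ≤ 1} => hrep y y.2
  have hnext (y : {y : E // Valued.v y ≤ 1}) : Valued.v ((y - digit y) / π) ≤ 1 := by
    rw [map_div₀]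
    exact div_le_one_of_le₀ (hclose y) zero_le
  let remainder : ℕ → {y : E // Valued.v y ≤ 1} :=
    fun n => (fun y => ⟨(y - digit y) / π, hnext y⟩)^[n] ⟨x, hx⟩
  have hremainder (n : ℕ) :
      (remainder n : E) - digit (remainder n) = remainder (n + 1) * π := by
    simp only [remainder, Function.iterate_succ_apply', div_mul_cancel₀ _ hπ0]
  have hpartial (N : ℕ) :
      ∑ n ∈ Finset.range N, digit (remainder n) * π ^ n = x - remainder N * π ^ N := by
    induction N with
    | zero => simp [remainder]
    | succ N ih =>
      rw [Finset.sum_range_succ, ih]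
      linear_combination -(π ^ N) * hremainder N
  refine ⟨fun n => digit (remainder n), fun n => hdigit _, ?_⟩
  rw [(summable_digits_mul_pow hπ fun n => hΓ _ (hdigit _)).hasSum_iff_tendsto_nat]
  simpa only [hpartial, sub_zero] using
    (tendsto_digits_mul_pow hπ fun n => (remainder n).2).const_sub x

end Valued

/-- The family `α` consists of integral elements whose classes form a `k`-basis of the valuation
ring modulo `π`; congruence modulo `π` is expressed as `Valued.v (x - y) ≤ Valued.v π`. -/
structure IsBasisModulo (k : Type*) {E Γ₀ ι : Type*} [Field k] [Field E]
    [LinearOrderedCommGroupWithZero Γ₀] [Valued E Γ₀] [Algebra k E] [Fintype ι] (π : E)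
    (α : ι → E) : Prop where
  valuation_le_one : ∀ i, Valued.v (α i) ≤ 1
  eq_zero_of_le : ∀ c : ι → k, Valued.v (∑ i, c i • α i) ≤ Valued.v π → c = 0
  exists_sub_le : ∀ x : E, Valued.v x ≤ 1 →
    ∃ c : ι → k, Valued.v (x - ∑ i, c i • α i) ≤ Valued.v π

namespace IsBasisModulo

variable {k E Γ₀ ι : Type*} [Field k] [Field E] [LinearOrderedCommGroupWithZero Γ₀] [Valued E Γ₀]
  [Algebra k E] [Fintype ι] {π : E} {α : ι → E}

theorem valuation_le_one_of_mem_span (hα : IsBasisModulo k π α)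
    (hk : ∀ c : k, Valued.v (algebraMap k E c) ≤ 1) {γ : E}
    (hγ : γ ∈ Submodule.span k (Set.range α)) : Valued.v γ ≤ 1 := by
  obtain ⟨c, rfl⟩ := (Submodule.mem_span_range_iff_exists_fun k).1 hγ
  refine Valuation.map_sum_le _ fun i _ => ?_
  rw [Algebra.smul_def, map_mul]
  exact mul_le_one' (hk _) (hα.valuation_le_one i)

theorem eq_zero_of_mem_span (hα : IsBasisModulo k π α) {γ : E}
    (hγ : γ ∈ Submodule.span k (Set.range α)) (hle : Valued.v γ ≤ Valued.v π) : γ = 0 := by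
  obtain ⟨c, rfl⟩ := (Submodule.mem_span_range_iff_exists_fun k).1 hγ
  simp only [hα.eq_zero_of_le c hle, Pi.zero_apply, zero_smul, Finset.sum_const_zero]

theorem exists_mem_span_sub_le (hα : IsBasisModulo k π α) {x : E} (hx : Valued.v x ≤ 1) :
    ∃ γ ∈ Submodule.span k (Set.range α), Valued.v (x - γ) ≤ Valued.v π := by
  obtain ⟨c, hc⟩ := hα.exists_sub_le x hx
  exact ⟨_, (Submodule.mem_span_range_iff_exists_fun k).2 ⟨c, rfl⟩, hc⟩

-- Clearing denominators turns a relation over `k(π)` into an expansion of `0`.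
theorem linearIndependent (hα : IsBasisModulo k π α)
    (hk : ∀ c : k, Valued.v (algebraMap k E c) ≤ 1) (hπ0 : π ≠ 0) (hπ : Valued.v π ≤ 1) :
    LinearIndependent k⟮π⟯ α := by
  refine Fintype.linearIndependent_iff.2 fun z hz i => ?_
  obtain ⟨Q, P, hQ, hP⟩ := exists_common_denominator_adjoin_simple fun i => (z i).2
  obtain ⟨B, hcoeff, heval⟩ := exists_eval_eq_sum_aeval_mul P α π
  have heval_zero : B.eval π = 0 := by
    simp only [heval, ← hP, mul_assoc, ← Finset.mul_sum]
    exact mul_eq_zero_of_right _ hz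
  have hcoeff_zero (n : ℕ) : B.coeff n = 0 := by
    refine digits_eq_zero_of_hasSum_zero (Γ := Submodule.span k (Set.range α)) hπ0 hπ
      (fun _ => hα.valuation_le_one_of_mem_span hk) (fun _ => hα.eq_zero_of_mem_span)
      (fun n => ?_) (heval_zero ▸ hasSum_coeff_mul_pow B π) n
    exact (Submodule.mem_span_range_iff_exists_fun k).2 ⟨_, (hcoeff n).symm⟩
  have hP_zero : P i = 0 := by
    ext n
    refine congrFun (hα.eq_zero_of_le (fun i => (P i).coeff n) ?_) i
    rw [← hcoeff, hcoeff_zero, map_zero]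
    exact zero_le
  have hz_zero : aeval π Q * z i = 0 := by rw [hP, hP_zero, map_zero]
  exact Subtype.ext ((mul_eq_zero.1 hz_zero).resolve_left hQ)

variable [MulArchimedean Γ₀] [CompleteSpace E]

-- Expand `x` in powers of `π` and collect the coefficients of each `α i`.
theorem mem_span_of_isClosed_of_le_one (hα : IsBasisModulo k π α)
    (hk : ∀ c : k, Valued.v (algebraMap k E c) ≤ 1) (hπ0 : π ≠ 0) (hπ : Valued.v π < 1)
    {F : Subfield E} (hF : IsClosed (F : Set E)) (hkF : ∀ c : k, algebraMap k E c ∈ F)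
    (hπF : π ∈ F) {x : E} (hx : Valued.v x ≤ 1) : x ∈ Submodule.span F (Set.range α) := by
  obtain ⟨a, ha, hsum⟩ := exists_hasSum_digits (Γ := Submodule.span k (Set.range α)) hπ0 hπ
    (fun _ => hα.valuation_le_one_of_mem_span hk) (fun _ => hα.exists_mem_span_sub_le) hx
  choose c hc using fun n => (Submodule.mem_span_range_iff_exists_fun k).1 (ha n)
  have hcoord (i : ι) := (summable_digits_mul_pow hπ fun n => hk (c n i)).hasSum
  have hcoord_mem (i : ι) : ∑' n, algebraMap k E (c n i) * π ^ n ∈ F :=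
    hF.mem_of_tendsto (hcoord i) <| .of_forall fun s =>
      sum_mem fun n _ => mul_mem (hkF _) (pow_mem hπF n)
  refine (Submodule.mem_span_range_iff_exists_fun F).2 ⟨fun i => ⟨_, hcoord_mem i⟩, ?_⟩
  refine HasSum.unique ?_ hsum
  refine (hasSum_sum fun i _ => (hcoord i).mul_right (α i)).congr_fun fun n => ?_
  simp only [← hc, Finset.sum_mul, Algebra.smul_def, mul_right_comm]

theorem span_eq_top_of_isClosed (hα : IsBasisModulo k π α)
    (hk : ∀ c : k, Valued.v (algebraMap k E c) ≤ 1) (hπ0 : π ≠ 0) (hπ : Valued.v π < 1)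
    {F : Subfield E} (hF : IsClosed (F : Set E)) (hkF : ∀ c : k, algebraMap k E c ∈ F)
    (hπF : π ∈ F) : Submodule.span F (Set.range α) = ⊤ := by
  refine eq_top_iff.2 fun x _ => ?_
  obtain ⟨N, hN⟩ : ∃ N : ℕ, Valued.v (π ^ N * x) ≤ 1 := by
    have htendsto := (Valued.tendsto_zero_pow_of_v_lt_one hπ).mul_const x
    rw [zero_mul] at htendsto
    exact (htendsto.eventually ((Valued.isOpen_integer E).mem_nhds (zero_mem _))).exists
  have hmem := hα.mem_span_of_isClosed_of_le_one hk hπ0 hπ hF hkF hπF hN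
  have hsmul := Submodule.smul_mem _ (⟨π, hπF⟩ ^ N : F)⁻¹ hmem
  convert hsmul using 1
  exact (inv_mul_cancel_left₀ (pow_ne_zero N hπ0) x).symm

theorem rank_le_card_of_isClosed (hα : IsBasisModulo k π α)
    (hk : ∀ c : k, Valued.v (algebraMap k E c) ≤ 1) (hπ0 : π ≠ 0) (hπ : Valued.v π < 1)
    {F : Subfield E} (hF : IsClosed (F : Set E)) (hkF : ∀ c : k, algebraMap k E c ∈ F)
    (hπF : π ∈ F) : Module.rank F E ≤ Fintype.card ι := by
  have hspan := hα.span_eq_top_of_isClosed hk hπ0 hπ hF hkF hπF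
  have : Module.Finite F E := ⟨hspan ▸ Submodule.fg_span (Set.finite_range α)⟩
  rw [← Module.finrank_eq_rank, Nat.cast_le, ← finrank_top, ← hspan]
  exact finrank_range_le_card α

end IsBasisModulo

theorem span_range_eq_of_rank_le_card {F V ι : Type*} [Field F] [AddCommGroup V] [Module F V]
    [Fintype ι] {α : ι → V} (hα : LinearIndependent F α) {W : Submodule F V}
    (hmem : ∀ i, α i ∈ W) (hrank : Module.rank F W ≤ Fintype.card ι) :
    Submodule.span F (Set.range α) = W := by
  have : FiniteDimensional F W :=
    Module.rank_lt_aleph0_iff.1 (hrank.trans_lt Cardinal.natCast_lt_aleph0)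
  refine Submodule.eq_of_le_of_finrank_le (Submodule.span_le.2 ?_) ?_
  · rintro _ ⟨i, rfl⟩
    exact hmem i
  · rw [finrank_span_eq_card hα]
    exact Module.finrank_le_of_rank_le hrank

section Expansions

variable {π x : Kv} {m : ℤ} {a : ℤ → Kv}

theorem IsExpansion.hasSum_div_zpow {Γ : Set Kv} (h : IsExpansion π Γ m a x) (hπ0 : π ≠ 0) :
    HasSum (fun n : ℕ => a (m + n) * π ^ n) (x / π ^ m) := by
  refine (h.2.div_const (π ^ m)).congr_fun fun n => ?_
  rw [zpow_add₀ hπ0, zpow_natCast, mul_left_comm, mul_div_cancel_left₀ _ (zpow_ne_zero m hπ0)]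

theorem ultimatelyPeriodic_iff_eventually {X : Type*} {m : ℤ} {a : ℤ → X} :
    UltimatelyPeriodic m a ↔
      ∃ L : ℕ, 0 < L ∧ ∀ᶠ n : ℕ in atTop, a (m + (n + L : ℕ)) = a (m + n) := by
  constructor
  · rintro ⟨N, L, hmN, hL, hper⟩
    lift L to ℕ using hL.le
    refine ⟨L, by exact_mod_cast hL, ?_⟩
    filter_upwards [eventually_ge_atTop (N - m).toNat] with n hn
    rw [Nat.cast_add, ← add_assoc]
    exact hper _ (by lia)
  · rintro ⟨L, hL, hper⟩
    obtain ⟨N, hN⟩ := eventually_atTop.1 hper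
    refine ⟨m + N, L, by lia, by exact_mod_cast hL, fun n hn => ?_⟩
    obtain ⟨j, rfl⟩ := Int.exists_add_of_le hn
    have := hN (N + j) (Nat.le_add_right N j)
    push_cast at this
    simpa only [add_assoc] using this

theorem IsBasisModulo.isCompleteSetOfReps {k ι : Type*} [Field k] [Algebra k Kv] [Fintype ι]
    {α : ι → Kv} (hα : IsBasisModulo k π α)
    (hk : ∀ c : k, Valued.v (algebraMap k Kv c) ≤ 1) :
    IsCompleteSetOfReps π (Submodule.span k (Set.range α) : Set Kv) := by
  refine ⟨fun _ => hα.valuation_le_one_of_mem_span hk, fun x hx => ?_⟩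
  obtain ⟨γ, hγ, hxγ⟩ := hα.exists_mem_span_sub_le hx
  refine ⟨γ, ⟨hγ, hxγ⟩, fun δ ⟨hδ, hxδ⟩ => sub_eq_zero.1 ?_⟩
  refine hα.eq_zero_of_mem_span (sub_mem hδ hγ) ?_
  rw [← sub_sub_sub_cancel_left γ δ x]
  exact Valuation.map_sub_le _ hxγ hxδ

variable {k ι : Type*} [Field k] [Algebra k Kv] [Fintype ι] {α : ι → Kv}

theorem IsBasisModulo.subset_span_of_degOver_eq [CompleteSpace Kv] (hα : IsBasisModulo k π α)
    (hk : ∀ c : k, Valued.v (algebraMap k Kv c) ≤ 1) (hπ0 : π ≠ 0) (hπ : Valued.v π < 1)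
    {K : Subfield Kv} (hαK : ∀ i, α i ∈ K)
    (hdeg : degOver k⟮π⟯.toSubfield K = Module.rank k⟮π⟯.toSubfield.topologicalClosure Kv) :
    (K : Set Kv) ⊆ Submodule.span k⟮π⟯ (Set.range α) := by
  have hle : k⟮π⟯.toSubfield ≤ k⟮π⟯.toSubfield.topologicalClosure :=
    Subfield.le_topologicalClosure _
  have hrank : Module.rank k⟮π⟯.toSubfield.topologicalClosure Kv ≤ Fintype.card ι :=
    hα.rank_le_card_of_isClosed hk hπ0 hπ (Subfield.isClosed_topologicalClosure _)
      (fun c => hle (k⟮π⟯.algebraMap_mem c)) (hle (mem_adjoin_simple_self k π))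
  rw [span_range_eq_of_rank_le_card (hα.linearIndependent hk hπ0 hπ.le)
    (fun i => Submodule.subset_span (hαK i)) (hdeg.trans_le hrank)]
  exact Submodule.subset_span

theorem IsBasisModulo.hasPropertyA (F₀ : Type*) [Field F₀] [Finite F₀] [Algebra F₀ k]
    [Algebra.IsAlgebraic F₀ k] (hα : IsBasisModulo k π α) (hπ0 : π ≠ 0) (hπ : Valued.v π < 1)
    {K : Subfield Kv} (hkK : ∀ c : k, algebraMap k Kv c ∈ K) (hπK : π ∈ K) (hαK : ∀ i, α i ∈ K)
    (hspan : (K : Set Kv) ⊆ Submodule.span k⟮π⟯ (Set.range α)) :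
    HasPropertyA K π (Submodule.span k (Set.range α) : Set Kv) := by
  intro x m a hexp
  have hsum := hexp.hasSum_div_zpow hπ0
  have hdigit (n : ℕ) := hexp.1 (m + n) (Int.le_add_of_nonneg_right n.cast_nonneg)
  rw [ultimatelyPeriodic_iff_eventually]
  constructor
  · intro hx
    obtain ⟨M, N, B, hNM, hB, heval⟩ :=
      exists_eval_eq_pow_sub_pow_mul F₀ (hspan (div_mem hx (zpow_mem hπK m)))
    have hk := valuation_algebraMap_le_one F₀ (k := k) (Valued.v (R := Kv))
    exact ⟨M - N, Nat.sub_pos_of_lt hNM, eventually_periodic_of_eval_eq_pow_sub_pow_mul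
      (Γ := (Submodule.span k (Set.range α)).toAddSubgroup) hπ0 hπ.le
      (fun _ => hα.valuation_le_one_of_mem_span hk) (fun _ => hα.eq_zero_of_mem_span)
      hdigit hsum hB hNM heval⟩
  · rintro ⟨L, hL, hper⟩
    have hspan_le (γ : Kv) (hγ : γ ∈ Submodule.span k (Set.range α)) : γ ∈ K := by
      obtain ⟨c, rfl⟩ := (Submodule.mem_span_range_iff_exists_fun k).1 hγ
      refine sum_mem fun i _ => ?_
      rw [Algebra.smul_def]
      exact mul_mem (hkK _) (hαK i)
    have hπL : π ^ L ≠ 1 := fun h => by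
      have := pow_lt_one' hπ hL.ne'
      rw [← map_pow, h, map_one] at this
      exact this.false
    have hmem := mem_of_hasSum_of_eventually_periodic hπK (fun n => hspan_le _ (hdigit n)) hsum
      hπL hper
    rw [← div_mul_cancel₀ x (zpow_ne_zero m hπ0)]
    exact mul_mem hmem (zpow_mem hπK m)

end Expansions

section ConstantField

theorem isAlgebraic_zmod_iff_exists_pow_eq {p : ℕ} [Fact p.Prime] {R : Type*} [Field R]
    [Algebra (ZMod p) R] {x : R} :
    IsAlgebraic (ZMod p) x ↔ ∃ n : ℕ, 0 < n ∧ x ^ p ^ n = x := by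
  constructor
  · intro hx
    have : FiniteDimensional (ZMod p) (ZMod p)⟮x⟯ := adjoin.finiteDimensional hx.isIntegral
    have : Finite (ZMod p)⟮x⟯ := Module.finite_of_finite (ZMod p)
    have : Fintype (ZMod p)⟮x⟯ := Fintype.ofFinite _
    have hpow := congrArg Subtype.val (FiniteField.pow_card (AdjoinSimple.gen (ZMod p) x))
    rw [Module.card_eq_pow_finrank (K := ZMod p), ZMod.card] at hpow
    exact ⟨_, Module.finrank_pos, hpow⟩
  · rintro ⟨n, hn, hx⟩
    have hp : 1 < p := (Fact.out : p.Prime).one_lt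
    refine ⟨X ^ p ^ n - X, FiniteField.X_pow_card_pow_sub_X_ne_zero _ hn.ne' hp, ?_⟩
    rw [map_sub, map_pow, aeval_X, hx, sub_self]

variable {E : Type*} [Field E] (p : ℕ) [Fact p.Prime] [CharP E p] (K : Subfield E)

/-- The set `ConstantField p K` as a subfield, so that it can serve as a field of scalars. -/
def constantSubfield : Subfield E :=
  letI := ZMod.algebra E p
  K ⊓ (algebraicClosure (ZMod p) E).toSubfield

theorem coe_constantSubfield : (constantSubfield p K : Set E) = ConstantField p K := by
  let := ZMod.algebra E p
  ext x
  exact and_congr_right' (mem_algebraicClosure_iff.trans isAlgebraic_zmod_iff_exists_pow_eq)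

instance constantSubfieldAlgebra : Algebra (ZMod p) (constantSubfield p K) :=
  ZMod.algebra _ p

instance constantSubfield_isAlgebraic : Algebra.IsAlgebraic (ZMod p) (constantSubfield p K) := by
  refine ⟨fun x => isAlgebraic_zmod_iff_exists_pow_eq.2 ?_⟩
  obtain ⟨-, n, hn, hx⟩ := (coe_constantSubfield p K).subset x.2
  exact ⟨n, hn, Subtype.ext hx⟩

theorem fqPi_eq_toSubfield_adjoin (π : E) :
    FqPi p K π = (constantSubfield p K)⟮π⟯.toSubfield := by
  rw [FqPi, ← coe_constantSubfield, adjoin_toSubfield]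
  exact congrArg (fun S : Set E => Subfield.closure (S ∪ {π})) Subtype.range_coe.symm

variable {ι : Type*} [Fintype ι] (α : ι → E)

theorem setOf_linear_digits_eq_span :
    {y | ∃ c : ι → E, (∀ i, c i ∈ ConstantField p K) ∧ y = ∑ i, c i * α i} =
      (Submodule.span (constantSubfield p K) (Set.range α) : Set E) := by
  ext y
  rw [SetLike.mem_coe, Submodule.mem_span_range_iff_exists_fun, ← coe_constantSubfield]
  constructor
  · rintro ⟨c, hc, rfl⟩
    exact ⟨fun i => ⟨c i, hc i⟩, rfl⟩
  · rintro ⟨c, rfl⟩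
    exact ⟨fun i => c i, fun i => (c i).2, rfl⟩

end ConstantField

section Density

variable {E Γ₀ : Type*} [Field E] [LinearOrderedCommGroupWithZero Γ₀] [Valued E Γ₀] {π : E}

theorem exists_mem_valuation_sub_le_of_dense {S : Set E} (hS : Dense S) (hπ0 : π ≠ 0) (x : E) :
    ∃ y ∈ S, Valued.v (x - y) ≤ Valued.v π := by
  have hopen : IsOpen {y : E | (x - y) / π ∈ Valued.v.integer} :=
    (Valued.isOpen_integer E).preimage (by fun_prop)
  obtain ⟨y, hyS, hy⟩ := hS.exists_mem_open hopen ⟨x, by simp⟩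
  refine ⟨y, hyS, ?_⟩
  rwa [Set.mem_ofPred_eq, Valuation.mem_integer_iff, map_div₀,
    div_le_one₀ (zero_lt_iff.2 ((Valuation.ne_zero_iff _).2 hπ0))] at hy

theorem isBasisModulo_constantSubfield_of_dense {p : ℕ} [Fact p.Prime] [CharP E p] {K : Subfield E}
    (hK : Dense (K : Set E)) (hπ0 : π ≠ 0) (hπ : Valued.v π ≤ 1) {ι : Type*} [Fintype ι]
    {α : ι → E} (hα : ∀ i, Valued.v (α i) ≤ 1)
    (hindep : ∀ c : ι → E, (∀ i, c i ∈ ConstantField p K) →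
      Valued.v (∑ i, c i * α i) ≤ Valued.v π → ∀ i, c i = 0)
    (hgen : ∀ x : E, x ∈ K → Valued.v x ≤ 1 →
      ∃ c : ι → E, (∀ i, c i ∈ ConstantField p K) ∧
        Valued.v (x - ∑ i, c i * α i) ≤ Valued.v π) :
    IsBasisModulo (constantSubfield p K) π α := by
  simp only [← coe_constantSubfield] at hindep hgen
  refine ⟨hα, fun c hc => ?_, fun x hx => ?_⟩
  · exact funext fun i => Subtype.ext (hindep (fun i => c i) (fun i => (c i).2) hc i)
  · obtain ⟨y, hyK, hxy⟩ := exists_mem_valuation_sub_le_of_dense hK hπ0 x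
    have hy : Valued.v y ≤ 1 := by
      rw [← sub_sub_cancel x y]
      exact Valuation.map_sub_le _ hx (hxy.trans hπ)
    obtain ⟨c, hc, hyc⟩ := hgen y hyK hy
    refine ⟨fun i => ⟨c i, hc i⟩, ?_⟩
    rw [← sub_add_sub_cancel x y]
    exact Valuation.map_add_le _ hxy hyc

end Density

theorem propertyA_of_linear_digits_general {Kv : Type*} [Field Kv] [Valued Kv ZM0]
    [CompleteSpace Kv] (F₀ : Type*) [Field F₀] [Finite F₀] {k : Type*} [Field k] [Algebra F₀ k]
    [Algebra.IsAlgebraic F₀ k] [Algebra k Kv] {K : Subfield Kv}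
    (hkK : ∀ c : k, algebraMap k Kv c ∈ K) {π : Kv} (hπ0 : π ≠ 0) (hπ : Valued.v π < 1)
    (hπK : π ∈ K)
    (hdeg : degOver k⟮π⟯.toSubfield K = Module.rank k⟮π⟯.toSubfield.topologicalClosure Kv)
    {ι : Type*} [Fintype ι] {α : ι → Kv} (hα : IsBasisModulo k π α) (hαK : ∀ i, α i ∈ K) :
    IsCompleteSetOfReps π (Submodule.span k (Set.range α) : Set Kv) ∧
      HasPropertyA K π (Submodule.span k (Set.range α) : Set Kv) :=
  have hk := valuation_algebraMap_le_one F₀ (k := k) (Valued.v (R := Kv))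
  ⟨hα.isCompleteSetOfReps hk, hα.hasPropertyA F₀ hπ0 hπ hkK hπK hαK
    (hα.subset_span_of_degOver_eq hk hπ0 hπ hαK hdeg)⟩

/-- **Lemma 2.2.** Suppose `π ∈ A` and `[K : 𝔽_q(π)] = [K_v : 𝔽_q((π))]`.
If `α₁, …, α_{ef} ∈ A` have reductions modulo `πA` forming an `𝔽_q`-basis of
`A/πA` (`𝔽_q`-linearly independent, with `ef = dim A/πA` of them), then
`Γ = 𝔽_q α₁ + ⋯ + 𝔽_q α_{ef}` is a complete set of representatives of
`A_v/πA_v` and `(Γ, π)` has property A. -/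
theorem propertyA_of_linear_digits
    {Kv : Type*} [Field Kv] [Valued Kv ZM0]
    (p : ℕ) [Fact p.Prime] (K : Subfield Kv)
    (hK : IsGlobalFunctionFieldCompletion p K)
    (π : Kv) (hπ0 : π ≠ 0) (hπ : Valued.v π < 1) (hπK : π ∈ K)
    (hdeg : degOver (FqPi p K π) (K : Set Kv) = Module.rank ↥(FqPiCompletion p K π) Kv)
    (s : ℕ) (α : Fin s → Kv)
    (hα : ∀ i, α i ∈ K ∧ Valued.v (α i) ≤ 1)
    (hindep : ∀ c : Fin s → Kv, (∀ i, c i ∈ ConstantField p K) →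
      Valued.v (∑ i, c i * α i) ≤ Valued.v π → ∀ i, c i = 0)
    (hgen : ∀ x : Kv, x ∈ K → Valued.v x ≤ 1 →
      ∃ c : Fin s → Kv, (∀ i, c i ∈ ConstantField p K) ∧
        Valued.v (x - ∑ i, c i * α i) ≤ Valued.v π) :
    IsCompleteSetOfReps π
        {y : Kv | ∃ c : Fin s → Kv, (∀ i, c i ∈ ConstantField p K) ∧ y = ∑ i, c i * α i} ∧
      HasPropertyA K π
        {y : Kv | ∃ c : Fin s → Kv, (∀ i, c i ∈ ConstantField p K) ∧ y = ∑ i, c i * α i} := by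
  have := hK.charP
  have := hK.complete
  rw [FqPiCompletion, fqPi_eq_toSubfield_adjoin] at hdeg
  rw [setOf_linear_digits_eq_span]
  exact propertyA_of_linear_digits_general (ZMod p) (fun c => c.2.1) hπ0 hπ hπK hdeg
    (isBasisModulo_constantSubfield_of_dense hK.dense hπ0 hπ.le (fun i => (hα i).2) hindep hgen)
    fun i => (hα i).1
end
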